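/- arXiv:1302.3695 — 4 statements merged into one kernel-verified Lean document; each statement's English description precedes it below -/
import Mathlib

section
/- Let a, b > 0, let φ(t) = (t+a)^μ f₁(t+a) = (b-t)^ν f₂(b-t) on [-a, b] with Re μ > -1, Re ν > -1, f₁(0), f₂(0) finite and nonzero, and f₁', f₂' bounded near 0, and let F(z) = ∫_{-a}^{b} φ(t) e^{zt} dt. Then as n → ∞, F(nz) = f₁(0) Γ(μ+1) (-nz)^{-μ-1} e^{-anz}(1 + O(1/n)) uniformly for z in a compact subset of {Re z < 0}. -/
open MeasureTheory intervalIntegral Complex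

/-!
On the right half-plane the Laplace transform of `s ^ μ` is `Γ(μ + 1) r ^ (-μ - 1)`: this is the
Gamma integral for `r > 0`, and both sides are holomorphic. If `G(s) = c s ^ μ + O(s ^ (Re μ + 1))`
at `0`, then `G(s) - c s ^ μ` is bounded by `M s ^ (Re μ + 1)` plus a part supported away from `0`,
so its transform is `O((Re r) ^ (-Re μ - 2))`: this is Watson's lemma to leading order. In a sector
`|r| ≤ κ Re r` the error is `O(1 / |r|)` relative to the leading term. The translate of `φ` by `a`,
cut off at `a + b`, is such a `G`, and `F(z) = e ^ (-a z) ∫ G(s) e ^ (z s) ds`. For `K` compact in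
the left half-plane, `-K` lies in a sector at positive distance from `0`; the sector is invariant
under scaling by `n`, which gives uniformity.
-/

section Watson

open Set Filter Topology Asymptotics

variable {E : Type*} [NormedAddCommGroup E] [NormedSpace ℂ E]

/-- The one-sided Laplace transform `r ↦ ∫₀^∞ e ^ (-r s) G(s) ds` of a vector-valued function; the
junk value is `0` where the integral does not converge absolutely. -/
noncomputable def laplaceTransform (G : ℝ → E) (r : ℂ) : E :=
  ∫ s in Ioi (0 : ℝ), cexp (-(r * s)) • G s

/-- The sector of half-angle `arccos (1 / κ)` about the positive real axis, without its vertex; on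
it powers of `Re r` and of `|r|` are comparable. It is empty for `κ < 1`. -/
def sector (κ : ℝ) : Set ℂ := {r | 0 < r.re ∧ ‖r‖ ≤ κ * r.re}

lemma ne_zero_of_mem_sector {κ : ℝ} {r : ℂ} (hr : r ∈ sector κ) : r ≠ 0 := by
  rintro rfl
  exact lt_irrefl _ hr.1

lemma norm_cexp_neg_mul_ofReal (r : ℂ) (s : ℝ) : ‖cexp (-(r * s))‖ = Real.exp (-(r.re * s)) := by
  simp [Complex.norm_exp]

lemma integrableOn_cexp_neg_mul_smul {G : ℝ → E} (hG : IntegrableOn G (Ioi 0)) {r : ℂ}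
    (hr : 0 ≤ r.re) : IntegrableOn (fun s : ℝ ↦ cexp (-(r * s)) • G s) (Ioi 0) := by
  refine Integrable.bdd_smul hG 1 (by fun_prop) ?_
  filter_upwards [ae_restrict_mem measurableSet_Ioi] with s hs
  rw [norm_cexp_neg_mul_ofReal, Real.exp_le_one_iff]
  exact neg_nonpos.2 (mul_nonneg hr (le_of_lt hs))

lemma integrableOn_rpow_mul_exp_neg_mul {σ x : ℝ} (hσ : -1 < σ) (hx : 0 < x) :
    IntegrableOn (fun s : ℝ ↦ s ^ σ * Real.exp (-(x * s))) (Ioi 0) := by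
  simpa using integrableOn_rpow_mul_exp_neg_mul_rpow hσ one_pos hx

lemma integrableOn_cexp_neg_mul_smul_cpow {μ r : ℂ} (hμ : -1 < μ.re) (hr : 0 < r.re) :
    IntegrableOn (fun s : ℝ ↦ cexp (-(r * s)) • (s : ℂ) ^ μ) (Ioi 0) := by
  have hcont : ContinuousOn (fun s : ℝ ↦ cexp (-(r * s)) • (s : ℂ) ^ μ) (Ioi 0) := by
    have hcpow : ContinuousOn (fun s : ℝ ↦ (s : ℂ) ^ μ) (Ioi 0) := fun s hs ↦
      (continuousAt_ofReal_cpow_const _ _ (Or.inr (ne_of_gt hs))).continuousWithinAt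
    fun_prop
  refine (integrableOn_rpow_mul_exp_neg_mul hμ hr).mono'
    (hcont.aestronglyMeasurable measurableSet_Ioi) ?_
  filter_upwards [ae_restrict_mem measurableSet_Ioi] with s hs
  rw [norm_smul, norm_cexp_neg_mul_ofReal, norm_cpow_eq_rpow_re_of_pos hs, mul_comm]

lemma mul_norm_cexp_neg_mul_le {x : ℝ} (hx : 0 < x) {r : ℂ} (hr : 2 * x ≤ r.re) {s : ℝ}
    (hs : 0 ≤ s) : s * ‖cexp (-(r * s))‖ ≤ x⁻¹ * ‖cexp (-((x : ℂ) * s))‖ := by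
  simp only [norm_cexp_neg_mul_ofReal, ofReal_re]
  have hxs : x * s ≤ Real.exp (x * s) := by linarith [Real.add_one_le_exp (x * s)]
  calc s * Real.exp (-(r.re * s)) ≤ s * Real.exp (-(2 * x * s)) := by gcongr
    _ = x⁻¹ * (x * s * Real.exp (-(2 * x * s))) := by field_simp
    _ ≤ x⁻¹ * (Real.exp (x * s) * Real.exp (-(2 * x * s))) := by gcongr
    _ = x⁻¹ * Real.exp (-(x * s)) := by rw [← Real.exp_add]; ring_nf

lemma differentiableOn_laplaceTransform {G : ℝ → E}
    (hG : ∀ r : ℂ, 0 < r.re → IntegrableOn (fun s : ℝ ↦ cexp (-(r * s)) • G s) (Ioi 0)) :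
    DifferentiableOn ℂ (laplaceTransform G) {r | 0 < r.re} := by
  intro r₀ (hr₀ : 0 < r₀.re)
  set x : ℝ := r₀.re / 4 with hx
  have hx0 : 0 < x := by positivity
  have hmeas (r : ℂ) : AEStronglyMeasurable (fun s : ℝ ↦ cexp (-(r * s)) • G s)
      (volume.restrict (Ioi 0)) := by
    have h := (hG 1 (by simp)).aestronglyMeasurable
    have hc : AEStronglyMeasurable (fun s : ℝ ↦ cexp ((1 - r) * s)) (volume.restrict (Ioi 0)) := by
      fun_prop
    refine (hc.smul h).congr (.of_forall fun s ↦ ?_)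
    simp only [Pi.smul_apply', smul_smul, ← Complex.exp_add]
    ring_nf
  have hnear : {r : ℂ | 2 * x < r.re} ∈ 𝓝 r₀ :=
    (isOpen_lt continuous_const continuous_re).mem_nhds (show 2 * x < r₀.re by linarith)
  refine (_root_.hasDerivAt_integral_of_dominated_loc_of_deriv_le
    (F' := fun (r : ℂ) (s : ℝ) ↦ -(s : ℂ) • cexp (-(r * s)) • G s)
    (bound := fun s : ℝ ↦ x⁻¹ * ‖cexp (-((x : ℂ) * s)) • G s‖)
    hnear (.of_forall hmeas) (hG r₀ hr₀) ?_ ?_ ?_ ?_).2.differentiableAt.differentiableWithinAt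
  · exact AEStronglyMeasurable.smul (by fun_prop) (hmeas r₀)
  · filter_upwards [ae_restrict_mem measurableSet_Ioi] with s (hs : 0 < s) r (hr : 2 * x < r.re)
    rw [norm_smul, norm_smul, norm_smul, norm_neg, norm_real, Real.norm_of_nonneg hs.le,
      ← mul_assoc, ← mul_assoc]
    exact mul_le_mul_of_nonneg_right (mul_norm_cexp_neg_mul_le hx0 hr.le hs.le) (norm_nonneg _)
  · exact (hG x (by simpa)).norm.const_mul _
  · refine .of_forall fun s r _ ↦ ?_
    have h : HasDerivAt (fun r : ℂ ↦ -(r * s)) (-(s : ℂ)) r := by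
      simpa using ((hasDerivAt_id r).mul_const (s : ℂ)).fun_neg
    simpa only [smul_smul, mul_comm] using h.cexp.smul_const (G s)

lemma laplaceTransform_cpow_ofReal {μ : ℂ} (hμ : -1 < μ.re) {x : ℝ} (hx : 0 < x) :
    laplaceTransform (fun s ↦ (s : ℂ) ^ μ) x = Gamma (μ + 1) * (x : ℂ) ^ (-μ - 1) := by
  have hΓ := integral_cpow_mul_exp_neg_mul_Ioi (a := μ + 1) (by simpa using by linarith) hx
  have harg : (x : ℂ).arg ≠ Real.pi := by simp [arg_ofReal_of_nonneg hx.le, Real.pi_ne_zero.symm]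
  rw [add_sub_cancel_right, one_div, inv_cpow _ _ harg, ← cpow_neg, neg_add'] at hΓ
  simp only [laplaceTransform, smul_eq_mul]
  rw [mul_comm (Gamma _), ← hΓ]
  simp only [mul_comm]

theorem laplaceTransform_cpow {μ r : ℂ} (hμ : -1 < μ.re) (hr : 0 < r.re) :
    laplaceTransform (fun s ↦ (s : ℂ) ^ μ) r = Gamma (μ + 1) * r ^ (-μ - 1) := by
  have hopen : IsOpen {r : ℂ | 0 < r.re} := isOpen_lt continuous_const continuous_re
  have hleft : AnalyticOnNhd ℂ (laplaceTransform fun s ↦ (s : ℂ) ^ μ) {r | 0 < r.re} :=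
    (differentiableOn_laplaceTransform fun r hr ↦
      integrableOn_cexp_neg_mul_smul_cpow hμ hr).analyticOnNhd hopen
  have hright : AnalyticOnNhd ℂ (fun r : ℂ ↦ Gamma (μ + 1) * r ^ (-μ - 1)) {r | 0 < r.re} :=
    DifferentiableOn.analyticOnNhd (fun r hr ↦ ((differentiableAt_id.cpow_const
      (Or.inl hr)).const_mul _).differentiableWithinAt) hopen
  have htendsto : Tendsto ((↑) : ℝ → ℂ) (𝓝[>] 1) (𝓝[≠] 1) :=
    tendsto_nhdsWithin_iff.2 ⟨(continuous_ofReal.tendsto' 1 1 ofReal_one).mono_left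
      nhdsWithin_le_nhds, eventually_mem_nhdsWithin.mono fun x hx ↦ by simpa using hx.ne'⟩
  have hfreq : ∃ᶠ r in 𝓝[≠] (1 : ℂ),
      laplaceTransform (fun s ↦ (s : ℂ) ^ μ) r = Gamma (μ + 1) * r ^ (-μ - 1) :=
    htendsto.frequently <| Eventually.frequently <| by
      filter_upwards [self_mem_nhdsWithin] with x hx
      exact laplaceTransform_cpow_ofReal hμ (zero_lt_one.trans hx)
  exact hleft.eqOn_of_preconnected_of_frequently_eq hright
    (convex_halfSpace_re_gt 0).isPreconnected (by simp) hfreq hr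

lemma exp_neg_le_div_rpow {q y : ℝ} (hq : 0 < q) (hy : 0 < y) : Real.exp (-y) ≤ (q / y) ^ q := by
  have h : y / q ≤ Real.exp (y / q) := by linarith [Real.add_one_le_exp (y / q)]
  calc Real.exp (-y) = (Real.exp (y / q))⁻¹ ^ q := by
        rw [← Real.exp_neg, ← Real.exp_mul]; field_simp
    _ ≤ (y / q)⁻¹ ^ q := by gcongr
    _ = (q / y) ^ q := by rw [inv_div]

lemma norm_laplaceTransform_le {G H : ℝ → E} {M q δ : ℝ} (hq : 0 < q) (hδ : 0 < δ)
    (hG : IntegrableOn G (Ioi 0))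
    (hH : ∀ s > 0, ‖H s‖ ≤ M * s ^ (q - 1) + (Ioi δ).indicator (‖G ·‖) s) {r : ℂ} (hr : 0 < r.re) :
    ‖laplaceTransform H r‖ ≤
      (M * Real.Gamma q + (q / δ) ^ q * ∫ s in Ioi (0 : ℝ), ‖G s‖) * r.re ^ (-q) := by
  have htail {s : ℝ} : Real.exp (-(r.re * s)) * (Ioi δ).indicator (‖G ·‖) s ≤
      (q / (r.re * δ)) ^ q * ‖G s‖ := by
    by_cases hs : s ∈ Ioi δ
    · rw [indicator_of_mem hs]
      gcongr
      calc Real.exp (-(r.re * s)) ≤ Real.exp (-(r.re * δ)) := by gcongr; exact le_of_lt hs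
        _ ≤ (q / (r.re * δ)) ^ q := exp_neg_le_div_rpow hq (by positivity)
    · rw [indicator_of_notMem hs, mul_zero]
      positivity
  have hpow := (integrableOn_rpow_mul_exp_neg_mul (σ := q - 1) (by linarith) hr).const_mul M
  have hcut := hG.norm.const_mul ((q / (r.re * δ)) ^ q)
  calc ‖laplaceTransform H r‖
    _ ≤ ∫ s in Ioi (0 : ℝ), (M * (s ^ (q - 1) * Real.exp (-(r.re * s))) +
          (q / (r.re * δ)) ^ q * ‖G s‖) := by
        refine norm_integral_le_of_norm_le (hpow.add hcut) ?_
        filter_upwards [ae_restrict_mem measurableSet_Ioi] with s hs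
        rw [norm_smul, norm_cexp_neg_mul_ofReal]
        have hHs := mul_le_mul_of_nonneg_left (hH s hs) (Real.exp_pos (-(r.re * s))).le
        linarith [htail (s := s)]
    _ = M * ((1 / r.re) ^ q * Real.Gamma q) +
          (q / (r.re * δ)) ^ q * ∫ s in Ioi (0 : ℝ), ‖G s‖ := by
        rw [integral_add hpow hcut, MeasureTheory.integral_const_mul,
          MeasureTheory.integral_const_mul, Real.integral_rpow_mul_exp_neg_mul_Ioi hq hr]
    _ = (M * Real.Gamma q + (q / δ) ^ q * ∫ s in Ioi (0 : ℝ), ‖G s‖) * r.re ^ (-q) := by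
        rw [mul_comm r.re, ← div_div, Real.div_rpow (by positivity : 0 ≤ q / δ) hr.le, one_div,
          Real.inv_rpow hr.le, Real.rpow_neg hr.le]
        ring

lemma exists_norm_sub_cpow_smul_le {G : ℝ → E} {c : E} {μ : ℂ}
    (hGc : (fun s : ℝ ↦ G s - (s : ℂ) ^ μ • c) =O[𝓝[>] 0] fun s ↦ s ^ (μ.re + 1)) :
    ∃ δ > 0, ∃ M : ℝ, ∀ s > 0,
      ‖G s - (s : ℂ) ^ μ • c‖ ≤ M * s ^ (μ.re + 1) + (Ioi δ).indicator (‖G ·‖) s := by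
  obtain ⟨M, hM, hbound⟩ := hGc.exists_nonneg
  obtain ⟨δ, hδ : 0 < δ, hδM⟩ := mem_nhdsGT_iff_exists_Ioc_subset.1 hbound.bound
  refine ⟨δ, hδ, M + ‖c‖ / δ, fun s hs ↦ ?_⟩
  have hpow : 0 ≤ s ^ (μ.re + 1) := by positivity
  obtain hsδ | hsδ := le_or_gt s δ
  · have hnear : ‖G s - (s : ℂ) ^ μ • c‖ ≤ M * ‖s ^ (μ.re + 1)‖ := hδM ⟨hs, hsδ⟩
    rw [Real.norm_of_nonneg hpow] at hnear
    rw [indicator_of_notMem (notMem_Ioi.2 hsδ), add_zero, add_mul]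
    exact hnear.trans (le_add_of_nonneg_right (by positivity))
  · have hfar : ‖(s : ℂ) ^ μ • c‖ ≤ (M + ‖c‖ / δ) * s ^ (μ.re + 1) :=
      calc ‖(s : ℂ) ^ μ • c‖ = ‖c‖ / s * s ^ (μ.re + 1) := by
            rw [norm_smul, norm_cpow_eq_rpow_re_of_pos hs, Real.rpow_add_one hs.ne']
            field_simp
        _ ≤ ‖c‖ / δ * s ^ (μ.re + 1) := by gcongr
        _ ≤ (M + ‖c‖ / δ) * s ^ (μ.re + 1) := by gcongr; linarith
    rw [indicator_of_mem (mem_Ioi.2 hsδ), add_comm]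
    exact (norm_sub_le _ _).trans (by gcongr)

section Complete

variable [CompleteSpace E] {G : ℝ → E} {c : E} {μ : ℂ}

lemma laplaceTransform_sub_cpow_smul (hμ : -1 < μ.re) (hG : IntegrableOn G (Ioi 0)) {r : ℂ}
    (hr : 0 < r.re) : laplaceTransform (fun s ↦ G s - (s : ℂ) ^ μ • c) r =
      laplaceTransform G r - (Gamma (μ + 1) * r ^ (-μ - 1)) • c := by
  have hpow := (integrableOn_cexp_neg_mul_smul_cpow hμ hr).smul_const c
  rw [← laplaceTransform_cpow hμ hr, laplaceTransform, laplaceTransform, laplaceTransform,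
    ← _root_.integral_smul_const,
    ← MeasureTheory.integral_sub (integrableOn_cexp_neg_mul_smul hG hr.le) hpow]
  simp only [smul_sub, smul_assoc]

theorem laplaceTransform_sub_isBigO (hμ : -1 < μ.re) (hG : IntegrableOn G (Ioi 0))
    (hGc : (fun s : ℝ ↦ G s - (s : ℂ) ^ μ • c) =O[𝓝[>] 0] fun s ↦ s ^ (μ.re + 1)) :
    (fun r ↦ laplaceTransform G r - (Gamma (μ + 1) * r ^ (-μ - 1)) • c)
      =O[𝓟 {r | 0 < r.re}] fun r ↦ r.re ^ (-(μ.re + 2)) := by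
  obtain ⟨δ, hδ, M, hM⟩ := exists_norm_sub_cpow_smul_le hGc
  refine isBigO_principal.2 ⟨M * Real.Gamma (μ.re + 2) +
    ((μ.re + 2) / δ) ^ (μ.re + 2) * ∫ s in Ioi (0 : ℝ), ‖G s‖, fun r (hr : 0 < r.re) ↦ ?_⟩
  rw [← laplaceTransform_sub_cpow_smul hμ hG hr, Real.norm_of_nonneg (Real.rpow_nonneg hr.le _)]
  refine norm_laplaceTransform_le (by linarith) hδ hG (fun s hs ↦ ?_) hr
  convert hM s hs using 4
  ring

lemma re_rpow_neg_isBigO_norm_rpow_neg (κ : ℝ) {q : ℝ} (hq : 0 ≤ q) :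
    (fun r : ℂ ↦ r.re ^ (-q)) =O[𝓟 (sector κ)] fun r ↦ ‖r‖ ^ (-q) := by
  refine isBigO_principal.2 ⟨κ ^ q, fun r ⟨hr, hκ⟩ ↦ ?_⟩
  have hnorm : 0 < ‖r‖ := hr.trans_le (re_le_norm r)
  have hκ0 : 0 < κ := pos_of_mul_pos_left (hnorm.trans_le hκ) hr.le
  rw [Real.norm_of_nonneg (by positivity), Real.norm_of_nonneg (by positivity),
    ← inv_inv (κ ^ q), ← Real.rpow_neg hκ0.le, ← Real.inv_rpow (by positivity),
    ← Real.mul_rpow (by positivity) hnorm.le]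
  exact Real.rpow_le_rpow_of_nonpos (by positivity) ((inv_mul_le_iff₀ hκ0).2 hκ) (by linarith)

theorem laplaceTransform_sub_isBigO_sector (hμ : -1 < μ.re) (hG : IntegrableOn G (Ioi 0))
    (hGc : (fun s : ℝ ↦ G s - (s : ℂ) ^ μ • c) =O[𝓝[>] 0] fun s ↦ s ^ (μ.re + 1))
    (hc : c ≠ 0) (κ : ℝ) :
    (fun r ↦ laplaceTransform G r - (Gamma (μ + 1) * r ^ (-μ - 1)) • c)
      =O[𝓟 (sector κ)] fun r ↦ r⁻¹ • (Gamma (μ + 1) * r ^ (-μ - 1)) • c := by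
  have hΓ : Gamma (μ + 1) ≠ 0 := Gamma_ne_zero_of_re_pos (by simpa using by linarith)
  calc (fun r ↦ laplaceTransform G r - (Gamma (μ + 1) * r ^ (-μ - 1)) • c)
    _ =O[𝓟 (sector κ)] fun r ↦ r.re ^ (-(μ.re + 2)) :=
        (laplaceTransform_sub_isBigO hμ hG hGc).mono (principal_mono.2 fun r hr ↦ hr.1)
    _ =O[𝓟 (sector κ)] fun r ↦ ‖r‖ ^ (-(μ.re + 2)) :=
        re_rpow_neg_isBigO_norm_rpow_neg κ (by linarith)
    _ = fun r : ℂ ↦ ‖r‖ ^ (-μ - 1 - 1).re := by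
        simp only [sub_re, neg_re, one_re]
        ring_nf
    _ =O[𝓟 (sector κ)] fun r ↦ r ^ (-μ - 1 - 1) :=
        (isTheta_cpow_const_rpow fun _ _ ↦ eventually_principal.2 fun _ ↦ ne_zero_of_mem_sector).2
    _ =O[𝓟 (sector κ)] fun r ↦ r⁻¹ • (Gamma (μ + 1) * r ^ (-μ - 1)) • c := by
        refine isBigO_principal.2 ⟨(‖Gamma (μ + 1)‖ * ‖c‖)⁻¹, fun r hr ↦ le_of_eq ?_⟩
        have hcnorm : ‖c‖ ≠ 0 := norm_ne_zero_iff.2 hc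
        have hΓnorm : ‖Gamma (μ + 1)‖ ≠ 0 := norm_ne_zero_iff.2 hΓ
        rw [cpow_sub _ _ (ne_zero_of_mem_sector hr), cpow_one]
        simp only [norm_smul, norm_mul, norm_div, norm_inv]
        field_simp

end Complete

lemma intervalIntegral_cexp_smul_eq_laplaceTransform {a b : ℝ} (hab : a ≤ b) (φ : ℝ → E) (z : ℂ) :
    ∫ t in a..b, cexp (z * t) • φ t = cexp (a * z) •
      laplaceTransform ((Ioc 0 (b - a)).indicator fun s ↦ φ (s + a)) (-z) := by
  have hcut (s : ℝ) : cexp (-(-z * s)) • (Ioc 0 (b - a)).indicator (fun s ↦ φ (s + a)) s =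
      (Ioc 0 (b - a)).indicator (fun s ↦ cexp (z * s) • φ (s + a)) s := by
    by_cases hs : s ∈ Ioc 0 (b - a) <;> simp [hs]
  have hshift := integral_comp_add_right (a := 0) (b := b - a) (fun t : ℝ ↦ cexp (z * t) • φ t) a
  rw [zero_add, sub_add_cancel] at hshift
  simp only [laplaceTransform, hcut]
  rw [setIntegral_indicator measurableSet_Ioc, inter_eq_self_of_subset_right Ioc_subset_Ioi_self,
    ← integral_of_le (sub_nonneg.2 hab), ← hshift, ← intervalIntegral.integral_smul]
  simp only [smul_smul, ← Complex.exp_add]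
  congr! 4
  push_cast
  ring

omit [NormedSpace ℂ E] in
lemma integrableOn_indicator_comp_add_right {a b : ℝ} (hab : a ≤ b) {φ : ℝ → E}
    (hφ : IntervalIntegrable φ volume a b) :
    IntegrableOn ((Ioc 0 (b - a)).indicator fun s ↦ φ (s + a)) (Ioi 0) := by
  have h := hφ.comp_add_right a
  rw [sub_self, intervalIntegrable_iff_integrableOn_Ioc_of_le (sub_nonneg.2 hab)] at h
  exact (h.integrable_indicator measurableSet_Ioc).integrableOn

lemma indicator_sub_cpow_smul_isBigO {L : ℝ} (hL : 0 < L) {μ : ℂ} {G g : ℝ → E}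
    (hG : ∀ s ∈ Ioc 0 L, G s = (s : ℂ) ^ μ • g s)
    (hg : (fun s ↦ g s - g 0) =O[𝓝[>] 0] fun s ↦ s) :
    (fun s : ℝ ↦ (Ioc 0 L).indicator G s - (s : ℂ) ^ μ • g 0) =O[𝓝[>] 0]
      fun s ↦ s ^ (μ.re + 1) := by
  have hpow : (fun s : ℝ ↦ (s : ℂ) ^ μ) =O[𝓝[>] 0] fun s ↦ s ^ μ.re :=
    IsBigO.of_bound' <| eventually_mem_nhdsWithin.mono fun s hs ↦ by
      rw [norm_cpow_eq_rpow_re_of_pos hs, Real.norm_of_nonneg (Real.rpow_nonneg (le_of_lt hs) _)]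
  refine (hpow.smul hg).congr' ?_ ?_
  · filter_upwards [Ioc_mem_nhdsGT hL] with s hs
    rw [indicator_of_mem hs, hG s hs, smul_sub]
  · filter_upwards [eventually_mem_nhdsWithin] with s hs
    rw [smul_eq_mul, Real.rpow_add_one (ne_of_gt hs)]

lemma exists_subset_sector {K : Set ℂ} (hK : IsCompact K) (hKright : K ⊆ {z | 0 < z.re}) :
    ∃ κ, K ⊆ sector κ := by
  obtain ⟨κ, hκ⟩ := hK.exists_bound_of_continuousOn (f := fun z : ℂ ↦ ‖z‖ / z.re) <|
    ContinuousOn.div (by fun_prop) (by fun_prop) fun z hz ↦ (hKright hz).ne'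
  exact ⟨κ, fun z hz ↦
    ⟨hKright hz, (div_le_iff₀ (hKright hz)).1 ((le_abs_self _).trans (hκ z hz))⟩⟩

lemma ofReal_mul_mem_sector {κ x : ℝ} (hx : 0 < x) {z : ℂ} (hz : z ∈ sector κ) :
    (x * z : ℂ) ∈ sector κ := by
  have hre : (x * z : ℂ).re = x * z.re := re_ofReal_mul x z
  refine ⟨hre ▸ mul_pos hx hz.1, ?_⟩
  rw [hre, norm_mul, norm_real, Real.norm_of_nonneg hx.le, mul_left_comm]
  exact mul_le_mul_of_nonneg_left hz.2 hx.le

lemma exists_norm_le_div_mul_of_isBigO_sector {R P : ℂ → E}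
    (hR : ∀ κ, R =O[𝓟 (sector κ)] fun r ↦ r⁻¹ • P r) {K : Set ℂ} (hK : IsCompact K)
    (hKright : K ⊆ {z | 0 < z.re}) :
    ∃ C : ℝ, ∀ x : ℝ, 0 < x → ∀ z ∈ K, ‖R (x * z)‖ ≤ C / x * ‖P (x * z)‖ := by
  obtain ⟨κ, hκ⟩ := exists_subset_sector hK hKright
  obtain ⟨B, hB⟩ : ∃ B, ∀ z ∈ K, ‖z⁻¹‖ ≤ B :=
    hK.exists_bound_of_continuousOn <| continuousOn_inv₀.mono fun _ hz ↦
      ne_zero_of_mem_sector (hκ hz)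
  obtain ⟨C, hC, hRC⟩ := (hR κ).exists_nonneg
  refine ⟨C * B, fun x hx z hz ↦ ?_⟩
  calc ‖R (x * z)‖
    _ ≤ C * ‖(x * z : ℂ)⁻¹ • P (x * z)‖ :=
        eventually_principal.1 hRC.bound _ (ofReal_mul_mem_sector hx (hκ hz))
    _ = C * ‖z⁻¹‖ / x * ‖P (x * z)‖ := by
        rw [norm_smul, mul_inv, norm_mul, norm_inv, norm_real, Real.norm_of_nonneg hx.le]
        ring
    _ ≤ C * B / x * ‖P (x * z)‖ := by gcongr; exact hB z hz

theorem intervalIntegral_cexp_smul_sub_isBigO_sector [CompleteSpace E] {a b : ℝ} (hab : a < b)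
    {μ : ℂ} (hμ : -1 < μ.re) {φ f : ℝ → E} (hint : IntervalIntegrable φ volume a b)
    (hφ : ∀ t ∈ Ioc a b, φ t = ((t - a : ℝ) : ℂ) ^ μ • f (t - a)) (hf0 : f 0 ≠ 0)
    (hf : (fun s ↦ f s - f 0) =O[𝓝[>] 0] fun s ↦ s) (κ : ℝ) :
    (fun r ↦ (∫ t in a..b, cexp (-r * t) • φ t) -
        cexp (a * -r) • (Gamma (μ + 1) * r ^ (-μ - 1)) • f 0)
      =O[𝓟 (sector κ)]
        fun r ↦ r⁻¹ • cexp (a * -r) • (Gamma (μ + 1) * r ^ (-μ - 1)) • f 0 := by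
  have hφa : ∀ s ∈ Ioc 0 (b - a), φ (s + a) = (s : ℂ) ^ μ • f s := fun s hs ↦ by
    simpa using hφ (s + a) ⟨by linarith [hs.1], by linarith [hs.2]⟩
  have hwatson := laplaceTransform_sub_isBigO_sector hμ
    (integrableOn_indicator_comp_add_right hab.le hint)
    (indicator_sub_cpow_smul_isBigO (sub_pos.2 hab) hφa hf) hf0 κ
  refine ((isBigO_refl (fun r : ℂ ↦ cexp (a * -r)) _).smul hwatson).congr (fun r ↦ ?_) fun r ↦ ?_
  · rw [intervalIntegral_cexp_smul_eq_laplaceTransform hab.le, neg_neg, smul_sub]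
  · exact smul_comm _ _ _

theorem F_asymptotics_left_halfplane_general {a b : ℝ} (hab : -a < b) {μ : ℂ} (hμ : -1 < μ.re)
    {φ f₁ : ℝ → ℂ} (hint : IntervalIntegrable φ volume (-a) b)
    (hφ₁ : ∀ t ∈ Icc (-a) b, φ t = ((t + a : ℝ) : ℂ) ^ μ * f₁ (t + a))
    (hf₁0 : f₁ 0 ≠ 0) (hf₁ : (fun s ↦ f₁ s - f₁ 0) =O[𝓝[>] 0] fun s ↦ s)
    {F : ℂ → ℂ} (hF : ∀ z : ℂ, F z = ∫ t in (-a)..b, φ t * cexp (z * t))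
    {K : Set ℂ} (hK : IsCompact K) (hKleft : K ⊆ {z : ℂ | z.re < 0}) :
    ∃ C : ℝ, ∀ x : ℝ, 0 < x → ∀ z ∈ K,
      ‖F (x * z) - f₁ 0 * Gamma (μ + 1) * (-(x : ℂ) * z) ^ (-μ - 1) * cexp (-(a : ℂ) * x * z)‖ ≤
        (C / x) *
          ‖f₁ 0 * Gamma (μ + 1) * (-(x : ℂ) * z) ^ (-μ - 1) * cexp (-(a : ℂ) * x * z)‖ := by
  have hφ : ∀ t ∈ Ioc (-a) b, φ t = ((t - -a : ℝ) : ℂ) ^ μ • f₁ (t - -a) := fun t ht ↦ by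
    simpa using hφ₁ t (Ioc_subset_Icc_self ht)
  obtain ⟨C, hC⟩ := exists_norm_le_div_mul_of_isBigO_sector
    (intervalIntegral_cexp_smul_sub_isBigO_sector hab hμ hint hφ hf₁0 hf₁) hK.neg
    fun z hz ↦ by simpa using hKleft hz
  refine ⟨C, fun x hx z hz ↦ ?_⟩
  have hmain : cexp (↑(-a) * -(x * -z)) • (Gamma (μ + 1) * (x * -z) ^ (-μ - 1)) • f₁ 0 =
      f₁ 0 * Gamma (μ + 1) * (-(x : ℂ) * z) ^ (-μ - 1) * cexp (-(a : ℂ) * x * z) := by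
    simp only [smul_eq_mul, ofReal_neg, mul_neg, neg_neg, neg_mul, mul_assoc]
    ring
  have hFx : F (x * z) = ∫ t in (-a)..b, cexp (-(x * -z) * t) • φ t := by
    simp only [hF, smul_eq_mul, mul_neg, neg_neg, mul_comm]
  rw [hFx, ← hmain]
  exact hC x hx (-z) (neg_mem_neg.2 hz)

end Watson

/-- Asymptotics of `F(nz)` for `Re z < 0`:
`F(nz) = f₁(0) Γ(μ+1) (-nz)^{-μ-1} e^{-anz} (1 + O(1/n))`
uniformly on compact subsets of the left half-plane. -/
theorem F_asymptotics_left_halfplane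
    (a b : ℝ) (ha : 0 < a) (hb : 0 < b)
    (μ ν : ℂ) (hμ : -1 < μ.re) (hν : -1 < ν.re)
    (φ f₁ f₂ : ℝ → ℂ)
    (hint : IntervalIntegrable φ volume (-a) b)
    (hφ₁ : ∀ t ∈ Set.Icc (-a) b, φ t = ((t + a : ℝ) : ℂ) ^ μ * f₁ (t + a))
    (hφ₂ : ∀ t ∈ Set.Icc (-a) b, φ t = ((b - t : ℝ) : ℂ) ^ ν * f₂ (b - t))
    (hf₁0 : f₁ 0 ≠ 0) (hf₂0 : f₂ 0 ≠ 0)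
    (hf₁ : ∃ δ > (0 : ℝ), (∀ t ∈ Set.Icc (0 : ℝ) δ, DifferentiableAt ℝ f₁ t) ∧
          ∃ M : ℝ, ∀ t ∈ Set.Icc (0 : ℝ) δ, ‖deriv f₁ t‖ ≤ M)
    (hf₂ : ∃ δ > (0 : ℝ), (∀ t ∈ Set.Icc (0 : ℝ) δ, DifferentiableAt ℝ f₂ t) ∧
          ∃ M : ℝ, ∀ t ∈ Set.Icc (0 : ℝ) δ, ‖deriv f₂ t‖ ≤ M)
    (F : ℂ → ℂ) (hF : ∀ z : ℂ, F z = ∫ t in (-a)..b, φ t * Complex.exp (z * t))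
    (K : Set ℂ) (hK : IsCompact K) (hKleft : K ⊆ {z : ℂ | z.re < 0}) :
    ∃ C : ℝ, ∃ N : ℕ, ∀ n ≥ N, ∀ z ∈ K,
      ‖F ((n : ℂ) * z) -
          f₁ 0 * Complex.Gamma (μ + 1) * (-(n : ℂ) * z) ^ (-μ - 1) *
            Complex.exp (-(a : ℂ) * n * z)‖
        ≤ (C / n) *
          ‖f₁ 0 * Complex.Gamma (μ + 1) * (-(n : ℂ) * z) ^ (-μ - 1) *
            Complex.exp (-(a : ℂ) * n * z)‖ := by
  obtain ⟨δ, hδ, hdiff, -⟩ := hf₁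
  have hf₁0_isBigO := (hdiff 0 ⟨le_rfl, hδ.le⟩).isBigO_sub.mono (nhdsWithin_le_nhds (s := .Ioi 0))
  obtain ⟨C, hC⟩ := F_asymptotics_left_halfplane_general (by linarith) hμ hint hφ₁ hf₁0
    (by simpa only [sub_zero] using hf₁0_isBigO) hF hK hKleft
  exact ⟨C, 1, fun n hn z hz ↦ mod_cast hC n (by exact_mod_cast hn) z hz⟩
end

section
/- Let a, b > 0, c = max{a, b}, φ as in the Section 2 assumptions, F(z) = ∫_{-a}^{b} φ(t) e^{zt} dt, and a_n = (1/n!) ∫_{-a}^{b} φ(t) t^n dt its Taylor coefficients. Then along the index subsequence guaranteeing nondegeneracy, |a_n|^{-1/n} ∼ n/(e c) as n → ∞, and consequently the order of the entire function F equals 1. -/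
open MeasureTheory intervalIntegral Complex Filter Real

/-!
Seen from an endpoint at distance `a` from the origin, the `n`-th moment is an integral of the form
`∫ t in 0..a, g t * (a - t) ^ n` with `g t ∼ L * t ^ μ`. The substitution `t = a * s / n` turns
`(a - t) ^ n` into `a ^ n * (1 - s / n) ^ n`, and dominated convergence yields the leading term
`L * a ^ (μ + 1) * Γ(μ + 1) * a ^ n * n ^ (-(μ + 1))`. Nondegeneracy prevents the leading terms of
the two endpoints from cancelling, so along the given indices the moment lies between
`c ^ n * n ^ κ'` and `c ^ n * n ^ κ` up to constants. By Stirling's formula `n ^ n * ‖A n‖` lies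
between such bounds with `exp 1 * c` in place of `c`, and taking `n`-th roots removes the powers
of `n`. The upper bound holds for all `n`, so every other index contributes at most as much to the
limsup defining the order, up to a vanishing error.
-/

open Asymptotics Set
open scoped Topology

section CoefficientGrowth

theorem limsup_eq_of_tendsto_of_eventually_le {α β : Type*}
    [ConditionallyCompleteLinearOrder β] [TopologicalSpace β] [OrderTopology β] {f g : Filter α}
    [f.NeBot] {u v : α → β} {x : β} (hfg : f ≤ g) (hu : Tendsto u f (𝓝 x)) (hv : Tendsto v g (𝓝 x))
    (huv : u ≤ᶠ[g] v) :
    limsup u g = x := by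
  have : g.NeBot := NeBot.mono ‹_› hfg
  have hbdd : IsBoundedUnder (· ≤ ·) g u := hv.isBoundedUnder_le.mono_le huv
  have hcobdd : IsCoboundedUnder (· ≤ ·) g u :=
    hu.isBoundedUnder_ge.isCoboundedUnder_le.mono (map_mono hfg)
  apply le_antisymm
  · exact (limsup_le_limsup huv hcobdd hv.isBoundedUnder_le).trans_eq hv.limsup_eq
  · exact hu.limsup_eq.symm.trans_le
      (limsup_le_limsup_of_le hfg hu.isBoundedUnder_ge.isCoboundedUnder_le hbdd)

variable {E : Type*} [SeminormedAddCommGroup E] {l : Filter ℕ}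

theorem tendsto_mul_pow_mul_rpow_rpow_one_div {C c : ℝ} (hC : 0 < C) (hc : 0 ≤ c) (κ : ℝ) :
    Tendsto (fun n : ℕ => (C * (c ^ n * (n : ℝ) ^ κ)) ^ (1 / n : ℝ)) atTop (𝓝 c) := by
  have hroot : Tendsto (fun n : ℕ => ((n : ℝ) ^ (1 / n : ℝ)) ^ κ) atTop (𝓝 1) := by
    simpa using (tendsto_rpow_div.comp tendsto_natCast_atTop_atTop).rpow_const (p := κ)
      (Or.inl one_ne_zero)
  have hconst : Tendsto (fun n : ℕ => C ^ (1 / n : ℝ)) atTop (𝓝 1) := by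
    simpa using tendsto_const_nhds.rpow tendsto_one_div_atTop_nhds_zero_nat (Or.inl hC.ne')
  have hprod : Tendsto (fun n : ℕ => C ^ (1 / n : ℝ) * (c * ((n : ℝ) ^ (1 / n : ℝ)) ^ κ)) atTop
      (𝓝 c) := by
    simpa using hconst.mul (hroot.const_mul c)
  refine hprod.congr' ?_
  filter_upwards [eventually_ne_atTop 0] with n hn
  rw [mul_rpow hC.le (by positivity), mul_rpow (by positivity) (by positivity), one_div,
    pow_rpow_inv_natCast hc hn, ← rpow_mul n.cast_nonneg, ← rpow_mul n.cast_nonneg, mul_comm κ]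

theorem tendsto_norm_rpow_one_div_of_isBigO (hl : l ≤ atTop) {u : ℕ → E} {c κ κ' : ℝ}
    (hc : 0 ≤ c) (hupper : u =O[l] fun n => c ^ n * (n : ℝ) ^ κ)
    (hlower : (fun n : ℕ => c ^ n * (n : ℝ) ^ κ') =O[l] u) :
    Tendsto (fun n : ℕ => ‖u n‖ ^ (1 / n : ℝ)) l (𝓝 c) := by
  obtain ⟨C, hC, hCu⟩ := hupper.exists_pos
  obtain ⟨C', hC', hCl⟩ := isBigO_iff''.1 hlower
  refine tendsto_of_tendsto_of_tendsto_of_le_of_le'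
    ((tendsto_mul_pow_mul_rpow_rpow_one_div hC' hc κ').mono_left hl)
    ((tendsto_mul_pow_mul_rpow_rpow_one_div hC hc κ).mono_left hl) ?_ ?_
  · filter_upwards [hCl] with n hn
    rw [Real.norm_of_nonneg (by positivity)] at hn
    gcongr
  · filter_upwards [hCu.bound] with n hn
    rw [Real.norm_of_nonneg (by positivity)] at hn
    gcongr

theorem natCast_pow_self_mul_rpow_one_div {n : ℕ} (hn : n ≠ 0) {x : ℝ} (hx : 0 ≤ x) :
    ((n : ℝ) ^ n * x) ^ (1 / n : ℝ) = n * x ^ (1 / n : ℝ) := by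
  rw [mul_rpow (by positivity) hx, one_div, pow_rpow_inv_natCast n.cast_nonneg hn]

theorem tendsto_norm_rpow_neg_one_div_div (hl : l ≤ atTop) {A : ℕ → E} {d κ κ' : ℝ} (hd : 0 < d)
    (hupper : (fun n : ℕ => (n : ℝ) ^ n * ‖A n‖) =O[l] fun n => d ^ n * (n : ℝ) ^ κ)
    (hlower : (fun n : ℕ => d ^ n * (n : ℝ) ^ κ') =O[l] fun n => (n : ℝ) ^ n * ‖A n‖) :
    Tendsto (fun n : ℕ => ‖A n‖ ^ (-(1 : ℝ) / n) / (n / d)) l (𝓝 1) := by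
  have hroot := (tendsto_norm_rpow_one_div_of_isBigO hl hd.le hupper hlower).inv₀ hd.ne'
  have hratio := hroot.const_mul d
  rw [mul_inv_cancel₀ hd.ne'] at hratio
  refine hratio.congr' ?_
  filter_upwards [hl (eventually_ne_atTop 0)] with n hn
  rw [Real.norm_of_nonneg (by positivity), natCast_pow_self_mul_rpow_one_div hn (norm_nonneg _),
    neg_div, rpow_neg (norm_nonneg _)]
  field_simp

theorem exists_tendsto_div_le_norm_rpow_neg_one_div {A : ℕ → E} {d κ : ℝ} (hd : 0 < d)
    (hupper : (fun n : ℕ => (n : ℝ) ^ n * ‖A n‖) =O[atTop] fun n => d ^ n * (n : ℝ) ^ κ) :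
    ∃ x : ℕ → ℝ, Tendsto (fun n => x n / n) atTop (𝓝 d⁻¹) ∧
      ∀ᶠ n in atTop, ‖A n‖ ≠ 0 → x n ≤ ‖A n‖ ^ (-(1 : ℝ) / n) := by
  obtain ⟨C, hC, hCA⟩ := hupper.exists_pos
  refine ⟨fun n => n / (C * (d ^ n * (n : ℝ) ^ κ)) ^ (1 / n : ℝ), ?_, ?_⟩
  · refine ((tendsto_mul_pow_mul_rpow_rpow_one_div hC hd.le κ).inv₀ hd.ne').congr' ?_
    filter_upwards [eventually_ne_atTop 0] with n hn
    field_simp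
  · filter_upwards [hCA.bound, eventually_ne_atTop 0] with n hbound hn hAn
    have hA0 : 0 < ‖A n‖ := (norm_nonneg _).lt_of_ne' hAn
    rw [Real.norm_of_nonneg (by positivity), Real.norm_of_nonneg (by positivity)] at hbound
    rw [neg_div, rpow_neg hA0.le, ← one_div, div_le_div_iff₀ (by positivity) (by positivity),
      one_mul, ← natCast_pow_self_mul_rpow_one_div hn hA0.le]
    gcongr

theorem tendsto_log_natCast_div_log (hl : l ≤ atTop) {x : ℕ → ℝ} {L : ℝ} (hL : L ≠ 0)
    (hx : Tendsto (fun n => x n / n) l (𝓝 L)) :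
    Tendsto (fun n : ℕ => Real.log n / Real.log (x n)) l (𝓝 1) := by
  have hlog : Tendsto (fun n : ℕ => Real.log n) l atTop :=
    Real.tendsto_log_atTop.comp (tendsto_natCast_atTop_atTop.mono_left hl)
  have hinv := (((hx.log hL).div_atTop hlog).add_const 1).inv₀ (by norm_num)
  rw [zero_add, inv_one] at hinv
  refine hinv.congr' ?_
  filter_upwards [hx.eventually_ne hL, hlog.eventually_gt_atTop 0] with n hxn hlogn
  obtain ⟨hx0, hn⟩ := div_ne_zero_iff.1 hxn
  rw [Real.log_div hx0 hn, sub_div, div_self hlogn.ne', sub_add_cancel, inv_div]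

theorem limsup_log_div_log_norm_rpow_eq_one [l.NeBot] (hl : l ≤ atTop) {A : ℕ → E} {d κ κ' : ℝ}
    (hd : 0 < d)
    (hupper : (fun n : ℕ => (n : ℝ) ^ n * ‖A n‖) =O[atTop] fun n => d ^ n * (n : ℝ) ^ κ)
    (hlower : (fun n : ℕ => d ^ n * (n : ℝ) ^ κ') =O[l] fun n => (n : ℝ) ^ n * ‖A n‖) :
    limsup (fun n : ℕ => Real.log n / Real.log (‖A n‖ ^ (-(1 : ℝ) / n))) atTop = 1 := by
  obtain ⟨x, hx, hxle⟩ := exists_tendsto_div_le_norm_rpow_neg_one_div hd hupper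
  have hd' : d⁻¹ ≠ 0 := inv_ne_zero hd.ne'
  have hA : Tendsto (fun n : ℕ => ‖A n‖ ^ (-(1 : ℝ) / n) / n) l (𝓝 d⁻¹) := by
    have h := (tendsto_norm_rpow_neg_one_div_div hl hd (hupper.mono hl) hlower).mul_const d⁻¹
    rw [one_mul] at h
    refine h.congr fun n => ?_
    field_simp
  have hxtop : Tendsto x atTop atTop := by
    refine (hx.pos_mul_atTop (inv_pos.2 hd) tendsto_natCast_atTop_atTop).congr' ?_
    filter_upwards [eventually_ne_atTop 0] with n hn
    field_simp
  refine limsup_eq_of_tendsto_of_eventually_le hl (tendsto_log_natCast_div_log hl hd' hA)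
    (tendsto_log_natCast_div_log le_rfl hd' hx) ?_
  filter_upwards [hxle, hxtop.eventually_gt_atTop 1, eventually_ne_atTop 0] with n hle hx1 hn
  have hlogx : 0 < Real.log (x n) := Real.log_pos hx1
  have hlogn : 0 ≤ Real.log n := Real.log_natCast_nonneg n
  by_cases hAn : ‖A n‖ = 0
  · -- The left side is `0`, because `0 ^ (-1 / n) = 0`, `log 0 = 0` and division by `0` gives `0`.
    have hexp : -(1 : ℝ) / n ≠ 0 := by simpa using hn
    rw [hAn, zero_rpow hexp, Real.log_zero, div_zero]
    positivity
  · exact div_le_div_of_nonneg_left hlogn hlogx (Real.log_le_log (by linarith) (hle hAn))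

theorem natCast_pow_self_div_factorial_isTheta :
    (fun n : ℕ => (n : ℝ) ^ n / (n.factorial : ℝ)) =Θ[atTop]
      fun n : ℕ => Real.exp 1 ^ n * (n : ℝ) ^ (-(1 / 2) : ℝ) := by
  have hstirling : (fun n : ℕ => (n : ℝ) ^ n / (n.factorial : ℝ)) =Θ[atTop]
      fun n : ℕ => (n : ℝ) ^ n / (√(2 * n * π) * (n / Real.exp 1) ^ n) :=
    (isTheta_refl _ _).div Stirling.factorial_isEquivalent_stirling.isTheta
  have heq : (fun n : ℕ => (n : ℝ) ^ n / (√(2 * n * π) * (n / Real.exp 1) ^ n)) =ᶠ[atTop]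
      fun n : ℕ => (√(2 * π))⁻¹ * (Real.exp 1 ^ n * (n : ℝ) ^ (-(1 / 2) : ℝ)) := by
    filter_upwards [eventually_gt_atTop 0] with n hn
    rw [rpow_neg n.cast_nonneg, ← sqrt_eq_rpow, mul_right_comm, Real.sqrt_mul (by positivity),
      div_pow]
    field_simp
  exact (hstirling.trans_eventuallyEq heq).of_const_mul_right (by positivity)

theorem natCast_pow_self_mul_norm_isTheta {A I : ℕ → ℂ}
    (hA : ∀ n : ℕ, A n = (1 / (n.factorial : ℂ)) * I n) :
    (fun n : ℕ => (n : ℝ) ^ n * ‖A n‖) =Θ[atTop]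
      fun n : ℕ => Real.exp 1 ^ n * (n : ℝ) ^ (-(1 / 2) : ℝ) * ‖I n‖ := by
  have hnorm : (fun n : ℕ => (n : ℝ) ^ n * ‖A n‖) =
      fun n : ℕ => (n : ℝ) ^ n / (n.factorial : ℝ) * ‖I n‖ := by
    ext n
    rw [hA, norm_mul, norm_div, norm_one, Complex.norm_natCast]
    ring
  rw [hnorm]
  exact natCast_pow_self_div_factorial_isTheta.mul (isTheta_refl _ _)

theorem tendsto_and_limsup_eq_one_of_eq_factorial_inv_mul [l.NeBot] (hl : l ≤ atTop) {A I : ℕ → ℂ}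
    {c κ κ' : ℝ} (hc : 0 < c) (hA : ∀ n : ℕ, A n = (1 / (n.factorial : ℂ)) * I n)
    (hupper : I =O[atTop] fun n : ℕ => c ^ n * (n : ℝ) ^ κ)
    (hlower : (fun n : ℕ => c ^ n * (n : ℝ) ^ κ') =O[l] I) :
    Tendsto (fun n : ℕ => ‖A n‖ ^ (-(1 : ℝ) / n) / (n / (Real.exp 1 * c))) l (𝓝 1) ∧
      limsup (fun n : ℕ => Real.log n / Real.log (‖A n‖ ^ (-(1 : ℝ) / n))) atTop = 1 := by
  have hΘ := natCast_pow_self_mul_norm_isTheta hA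
  have hd : 0 < Real.exp 1 * c := by positivity
  have hmul (r : ℝ) : (fun n : ℕ => Real.exp 1 ^ n * (n : ℝ) ^ (-(1 / 2) : ℝ) *
      (c ^ n * (n : ℝ) ^ r)) =ᶠ[atTop]
        fun n : ℕ => (Real.exp 1 * c) ^ n * (n : ℝ) ^ (r - 1 / 2) := by
    filter_upwards [eventually_gt_atTop 0] with n hn
    rw [sub_eq_neg_add, rpow_add (by positivity), mul_pow]
    ring
  have hupper' := hΘ.isBigO.trans (((isBigO_refl _ _).mul hupper.norm_left).trans_eventuallyEq
    (hmul κ))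
  have hlower' := ((hmul κ').symm.filter_mono hl).trans_isBigO
    (((isBigO_refl _ _).mul hlower.norm_right).trans (hΘ.mono hl).isBigO_symm)
  exact ⟨tendsto_norm_rpow_neg_one_div_div hl hd (hupper'.mono hl) hlower',
    limsup_log_div_log_norm_rpow_eq_one hl hd hupper' hlower'⟩

end CoefficientGrowth

section EndpointContribution

theorem isLittleO_pow_mul_rpow_of_lt {x y : ℝ} (hx : 0 < x) (hxy : x < y) (r s : ℝ) :
    (fun n : ℕ => x ^ n * (n : ℝ) ^ r) =o[atTop] fun n : ℕ => y ^ n * (n : ℝ) ^ s := by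
  have hy : 0 < y := hx.trans hxy
  have hexp : (fun n : ℕ => (n : ℝ) ^ (r - s)) =o[atTop]
      fun n : ℕ => Real.exp (Real.log (y / x) * n) :=
    (isLittleO_rpow_exp_pos_mul_atTop (r - s)
      (Real.log_pos ((one_lt_div hx).2 hxy))).comp_tendsto tendsto_natCast_atTop_atTop
  refine ((isBigO_refl (fun n : ℕ => x ^ n * (n : ℝ) ^ s) atTop).mul_isLittleO hexp).congr' ?_ ?_
  · filter_upwards [eventually_gt_atTop 0] with n hn
    rw [mul_assoc, ← rpow_add (by positivity), add_sub_cancel]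
  · filter_upwards with n
    rw [mul_comm (Real.log _), Real.exp_nat_mul, Real.exp_log (div_pos hy hx), div_pow]
    field_simp

variable {g : ℝ → ℂ} {μ L : ℂ}

theorem cpow_mul_comp_div {x s : ℝ} (hx : 0 < x) (hs : 0 < s) :
    (x : ℂ) ^ μ * g (s / x) = (s : ℂ) ^ μ * (g (s / x) / ((s / x : ℝ) : ℂ) ^ μ) := by
  have hx0 : (x : ℂ) ^ μ ≠ 0 := by simp [cpow_eq_zero_iff, hx.ne']
  have hs0 : (s : ℂ) ^ μ ≠ 0 := by simp [cpow_eq_zero_iff, hs.ne']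
  rw [ofReal_div, div_cpow_ofReal_nonneg hs.le hx.le]
  field_simp

theorem tendsto_comp_div_mul_one_sub_div_pow
    (hL : Tendsto (fun t : ℝ => g t / (t : ℂ) ^ μ) (𝓝[>] 0) (𝓝 L)) {s : ℝ} (hs : 0 < s) :
    Tendsto (fun n : ℕ => (n : ℂ) ^ μ * g (s / n) * ((1 - s / n : ℝ) : ℂ) ^ n) atTop
      (𝓝 (L * (Real.exp (-s) * (s : ℂ) ^ μ))) := by
  have hzero : Tendsto (fun n : ℕ => s / n) atTop (𝓝[>] 0) := by
    refine tendsto_nhdsWithin_iff.2 ⟨tendsto_const_div_atTop_nhds_zero_nat s, ?_⟩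
    filter_upwards [eventually_gt_atTop 0] with n hn
    exact div_pos hs (by positivity)
  have hexp : Tendsto (fun n : ℕ => ((1 - s / n : ℝ) : ℂ) ^ n) atTop (𝓝 (Real.exp (-s) : ℂ)) := by
    have h := (continuous_ofReal.tendsto _).comp (Real.tendsto_one_add_div_pow_exp (-s))
    refine h.congr fun n => ?_
    simp [neg_div, sub_eq_add_neg]
  have hprod := ((hL.comp hzero).const_mul ((s : ℂ) ^ μ)).mul hexp
  rw [show L * (Real.exp (-s) * (s : ℂ) ^ μ) = (s : ℂ) ^ μ * L * Real.exp (-s) by ring]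
  refine hprod.congr' ?_
  filter_upwards [eventually_gt_atTop 0] with n hn
  have hcomp := cpow_mul_comp_div (g := g) (μ := μ) (x := n) (by positivity) hs
  rw [ofReal_natCast] at hcomp
  rw [hcomp, Function.comp_apply]

theorem norm_comp_div_mul_one_sub_div_pow_le {C : ℝ}
    (hC : ∀ t ∈ Ioc (0 : ℝ) 1, ‖g t / (t : ℂ) ^ μ‖ ≤ C) (hg : ∀ t > 1, g t = 0)
    {n : ℕ} (hn : 0 < n) {s : ℝ} (hs : 0 < s) :
    ‖(n : ℂ) ^ μ * g (s / n) * ((1 - s / n : ℝ) : ℂ) ^ n‖ ≤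
      C * (Real.exp (-s) * s ^ μ.re) := by
  have hn' : (0 : ℝ) < n := by positivity
  have hC0 : 0 ≤ C := (norm_nonneg _).trans (hC 1 (by simp))
  rcases le_or_gt s n with hsn | hsn
  · have hmem : s / n ∈ Ioc (0 : ℝ) 1 := ⟨div_pos hs hn', (div_le_one hn').2 hsn⟩
    have hcomp := cpow_mul_comp_div (g := g) (μ := μ) hn' hs
    rw [ofReal_natCast] at hcomp
    rw [hcomp, norm_mul, norm_mul, norm_cpow_eq_rpow_re_of_pos hs, norm_pow,
      Complex.norm_of_nonneg (sub_nonneg.2 hmem.2)]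
    calc s ^ μ.re * ‖g (s / n) / ((s / n : ℝ) : ℂ) ^ μ‖ * (1 - s / n) ^ n
        ≤ s ^ μ.re * C * Real.exp (-s) := by
          gcongr
          · exact pow_nonneg (sub_nonneg.2 hmem.2) n
          · exact hC _ hmem
          · exact Real.one_sub_div_pow_le_exp_neg hsn
      _ = C * (Real.exp (-s) * s ^ μ.re) := by ring
  · rw [hg _ ((one_lt_div hn').2 hsn), mul_zero, zero_mul, norm_zero]
    positivity

theorem aestronglyMeasurable_comp_div_mul_one_sub_div_pow (hint : IntegrableOn g (Ioi 0)) {n : ℕ}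
    (hn : 0 < n) :
    AEStronglyMeasurable (fun s : ℝ => (n : ℂ) ^ μ * g (s / n) * ((1 - s / n : ℝ) : ℂ) ^ n)
      (volume.restrict (Ioi 0)) := by
  have hg : IntegrableOn (fun s => g (s / n)) (Ioi 0) := by
    have h := (integrableOn_Ioi_comp_mul_left_iff g 0 (inv_pos.2 (Nat.cast_pos (α := ℝ).2 hn))).2
      (by simpa using hint)
    simpa only [div_eq_inv_mul] using h
  have hpow : Continuous fun s : ℝ => ((1 - s / n : ℝ) : ℂ) ^ n := by fun_prop
  exact (hg.aestronglyMeasurable.const_mul _).mul hpow.aestronglyMeasurable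

theorem integral_Ioi_comp_div_mul_one_sub_div_pow {n : ℕ} (hn : 0 < n) :
    ∫ s in Ioi (0 : ℝ), (n : ℂ) ^ μ * g (s / n) * ((1 - s / n : ℝ) : ℂ) ^ n =
      (n : ℂ) ^ (μ + 1) * ∫ t in Ioi (0 : ℝ), g t * ((1 - t : ℝ) : ℂ) ^ n := by
  have hn' : (0 : ℝ) < n := Nat.cast_pos.2 hn
  have hsubst := integral_comp_mul_left_Ioi (fun t : ℝ => g t * ((1 - t : ℝ) : ℂ) ^ n) 0
    (inv_pos.2 hn')
  simp only [← div_eq_inv_mul, zero_div, inv_inv] at hsubst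
  simp only [mul_assoc]
  rw [MeasureTheory.integral_const_mul, hsubst, cpow_add _ _ (by exact_mod_cast hn.ne'), cpow_one,
    real_smul, ofReal_natCast, mul_assoc]

theorem tendsto_cpow_mul_integral_Ioi_mul_one_sub_pow (hμ : -1 < μ.re) {C : ℝ}
    (hint : IntegrableOn g (Ioi 0)) (hC : ∀ t ∈ Ioc (0 : ℝ) 1, ‖g t / (t : ℂ) ^ μ‖ ≤ C)
    (hg : ∀ t > 1, g t = 0)
    (hL : Tendsto (fun t : ℝ => g t / (t : ℂ) ^ μ) (𝓝[>] 0) (𝓝 L)) :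
    Tendsto (fun n : ℕ => (n : ℂ) ^ (μ + 1) * ∫ t in Ioi (0 : ℝ), g t * ((1 - t : ℝ) : ℂ) ^ n)
      atTop (𝓝 (L * Complex.Gamma (μ + 1))) := by
  have hre : 0 < (μ + 1).re := by simpa using by linarith
  have hconv := (Real.GammaIntegral_convergent (s := μ.re + 1) (by linarith)).const_mul C
  have hdct := tendsto_integral_filter_of_dominated_convergence
    (μ := volume.restrict (Ioi (0 : ℝ)))
    (F := fun (n : ℕ) s => (n : ℂ) ^ μ * g (s / n) * ((1 - s / n : ℝ) : ℂ) ^ n)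
    (fun s => C * (Real.exp (-s) * s ^ μ.re)) (l := atTop)
    (f := fun s => L * (Real.exp (-s) * (s : ℂ) ^ μ)) ?_ ?_ (by simpa using hconv) ?_
  · rw [MeasureTheory.integral_const_mul] at hdct
    rw [Complex.Gamma_eq_integral hre, GammaIntegral]
    simp only [add_sub_cancel_right]
    refine hdct.congr' ?_
    filter_upwards [eventually_gt_atTop 0] with n hn
    exact integral_Ioi_comp_div_mul_one_sub_div_pow hn
  · filter_upwards [eventually_gt_atTop 0] with n hn
    exact aestronglyMeasurable_comp_div_mul_one_sub_div_pow hint hn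
  · filter_upwards [eventually_gt_atTop 0] with n hn
    filter_upwards [ae_restrict_mem measurableSet_Ioi] with s hs
    exact norm_comp_div_mul_one_sub_div_pow_le hC hg hn hs
  · filter_upwards [ae_restrict_mem measurableSet_Ioi] with s hs
    exact tendsto_comp_div_mul_one_sub_div_pow hL hs

theorem exists_Ioc_norm_le_of_tendsto {f : ℝ → ℂ} {L : ℂ} (hf : Tendsto f (𝓝[>] 0) (𝓝 L)) :
    ∃ η ∈ Ioo (0 : ℝ) 1, ∀ t ∈ Ioc 0 η, ‖f t‖ ≤ ‖L‖ + 1 := by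
  have hev : ∀ᶠ t in 𝓝[>] (0 : ℝ), ‖f t‖ ≤ ‖L‖ + 1 :=
    hf.norm.eventually_le_const (lt_add_one _)
  obtain ⟨ε, hε, hsub⟩ := (mem_nhdsGT_iff_exists_Ioc_subset).1 hev
  refine ⟨min ε (1 / 2), ⟨by simpa using hε, by norm_num⟩, fun t ht => ?_⟩
  exact hsub ⟨ht.1, ht.2.trans (min_le_left _ _)⟩

theorem tendsto_cpow_mul_integral_mul_one_sub_pow_zero {η : ℝ} (hη : η ∈ Ioo (0 : ℝ) 1)
    (hint : IntervalIntegrable g volume η 1) :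
    Tendsto (fun n : ℕ => (n : ℂ) ^ μ * ∫ t in η..1, g t * ((1 - t : ℝ) : ℂ) ^ n) atTop
      (𝓝 0) := by
  have hsmall : Tendsto (fun n : ℕ => (1 - η) ^ n * (n : ℝ) ^ μ.re * ∫ t in η..1, ‖g t‖) atTop
      (𝓝 0) := by
    have h := (isLittleO_pow_mul_rpow_of_lt (sub_pos.2 hη.2) (sub_lt_self 1 hη.1) μ.re 0)
    simp only [one_pow, rpow_zero, mul_one, isLittleO_one_iff] at h
    simpa using h.mul_const (∫ t in η..1, ‖g t‖)
  refine squeeze_zero_norm' ?_ hsmall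
  filter_upwards [eventually_gt_atTop 0] with n hn
  have hbound : ‖∫ t in η..1, g t * ((1 - t : ℝ) : ℂ) ^ n‖ ≤
      ∫ t in η..1, (1 - η) ^ n * ‖g t‖ := by
    refine norm_integral_le_of_norm_le hη.2.le (ae_of_all _ fun t ht => ?_)
      (hint.norm.const_mul _)
    have h0 : 0 ≤ 1 - t := sub_nonneg.2 ht.2
    rw [norm_mul, norm_pow, Complex.norm_of_nonneg h0, mul_comm]
    gcongr
    exact ht.1.le
  rw [intervalIntegral.integral_const_mul] at hbound
  rw [norm_mul, norm_natCast_cpow_of_pos hn, mul_comm ((1 - η) ^ n), mul_assoc]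
  gcongr

theorem tendsto_cpow_mul_integral_mul_one_sub_pow_of_norm_le {η C : ℝ} (hη : η ∈ Ioo (0 : ℝ) 1)
    (hμ : -1 < μ.re) (hint : IntervalIntegrable g volume 0 η)
    (hC : ∀ t ∈ Ioc 0 η, ‖g t / (t : ℂ) ^ μ‖ ≤ C)
    (hL : Tendsto (fun t : ℝ => g t / (t : ℂ) ^ μ) (𝓝[>] 0) (𝓝 L)) :
    Tendsto (fun n : ℕ => (n : ℂ) ^ (μ + 1) * ∫ t in (0 : ℝ)..η, g t * ((1 - t : ℝ) : ℂ) ^ n)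
      atTop (𝓝 (L * Complex.Gamma (μ + 1))) := by
  have hind : Tendsto (fun n : ℕ => (n : ℂ) ^ (μ + 1) *
      ∫ t in Ioi (0 : ℝ), (Ioc 0 η).indicator g t * ((1 - t : ℝ) : ℂ) ^ n)
      atTop (𝓝 (L * Complex.Gamma (μ + 1))) := by
    refine tendsto_cpow_mul_integral_Ioi_mul_one_sub_pow (C := C) hμ ?_ ?_ ?_ ?_
    · exact (((intervalIntegrable_iff_integrableOn_Ioc_of_le hη.1.le).1 hint).integrable_indicator
        measurableSet_Ioc).integrableOn
    · intro t _
      by_cases hmem : t ∈ Ioc 0 η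
      · simpa [hmem] using hC t hmem
      · rw [indicator_of_notMem hmem, zero_div, norm_zero]
        exact (norm_nonneg _).trans (hC η (right_mem_Ioc.2 hη.1))
    · intro t ht
      exact indicator_of_notMem (fun hmem => (hmem.2.trans hη.2.le).not_gt ht) g
    · refine hL.congr' ?_
      filter_upwards [Ioc_mem_nhdsGT hη.1] with t ht
      rw [indicator_of_mem ht]
  refine hind.congr fun n => ?_
  have hmul (t : ℝ) : (Ioc 0 η).indicator g t * ((1 - t : ℝ) : ℂ) ^ n =
      (Ioc 0 η).indicator (fun t => g t * ((1 - t : ℝ) : ℂ) ^ n) t :=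
    (Set.indicator_mul_left (Ioc 0 η) g fun t => ((1 - t : ℝ) : ℂ) ^ n).symm
  simp only [hmul]
  rw [setIntegral_indicator measurableSet_Ioc, inter_eq_right.2 Ioc_subset_Ioi_self,
    integral_of_le hη.1.le]

theorem tendsto_cpow_mul_integral_mul_one_sub_pow (hμ : -1 < μ.re)
    (hint : IntervalIntegrable g volume 0 1)
    (hL : Tendsto (fun t : ℝ => g t / (t : ℂ) ^ μ) (𝓝[>] 0) (𝓝 L)) :
    Tendsto (fun n : ℕ => (n : ℂ) ^ (μ + 1) * ∫ t in (0 : ℝ)..1, g t * ((1 - t : ℝ) : ℂ) ^ n)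
      atTop (𝓝 (L * Complex.Gamma (μ + 1))) := by
  obtain ⟨η, hη, hC⟩ := exists_Ioc_norm_le_of_tendsto hL
  have hmem : η ∈ uIcc (0 : ℝ) 1 := Icc_subset_uIcc (Ioo_subset_Icc_self hη)
  have hleft : IntervalIntegrable g volume 0 η := hint.mono_set (uIcc_subset_uIcc_left hmem)
  have hright : IntervalIntegrable g volume η 1 := hint.mono_set (uIcc_subset_uIcc_right hmem)
  have hnear := tendsto_cpow_mul_integral_mul_one_sub_pow_of_norm_le hη hμ hleft hC hL
  have hfar := tendsto_cpow_mul_integral_mul_one_sub_pow_zero (μ := μ + 1) hη hright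
  refine (add_zero (L * _) ▸ hnear.add hfar).congr fun n => ?_
  have hpow : Continuous fun t : ℝ => ((1 - t : ℝ) : ℂ) ^ n := by fun_prop
  rw [← mul_add, integral_add_adjacent_intervals (hleft.mul_continuousOn hpow.continuousOn)
    (hright.mul_continuousOn hpow.continuousOn)]

theorem tendsto_comp_mul_div_cpow {a : ℝ} (ha : 0 < a)
    (hL : Tendsto (fun t : ℝ => g t / (t : ℂ) ^ μ) (𝓝[>] 0) (𝓝 L)) :
    Tendsto (fun s : ℝ => g (a * s) / (s : ℂ) ^ μ) (𝓝[>] 0) (𝓝 ((a : ℂ) ^ μ * L)) := by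
  have hmul : Tendsto (fun s => a * s) (𝓝[>] 0) (𝓝[>] 0) := by
    refine tendsto_nhdsWithin_iff.2 ⟨?_, ?_⟩
    · exact ((continuous_const_mul a).tendsto' 0 0 (mul_zero a)).mono_left nhdsWithin_le_nhds
    · filter_upwards [self_mem_nhdsWithin] with s hs using mul_pos ha hs
  refine ((hL.comp hmul).const_mul ((a : ℂ) ^ μ)).congr' ?_
  filter_upwards [self_mem_nhdsWithin] with s hs
  have ha0 : (a : ℂ) ^ μ ≠ 0 := by simp [cpow_eq_zero_iff, ha.ne']
  rw [Function.comp_apply, ofReal_mul, mul_cpow_ofReal_nonneg ha.le (le_of_lt hs)]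
  field_simp

theorem tendsto_cpow_mul_integral_mul_sub_pow {a : ℝ} (ha : 0 < a) (hμ : -1 < μ.re)
    (hint : IntervalIntegrable g volume 0 a)
    (hL : Tendsto (fun t : ℝ => g t / (t : ℂ) ^ μ) (𝓝[>] 0) (𝓝 L)) :
    Tendsto (fun n : ℕ => (n : ℂ) ^ (μ + 1) / (a : ℂ) ^ n *
        ∫ t in (0 : ℝ)..a, g t * ((a - t : ℝ) : ℂ) ^ n)
      atTop (𝓝 (L * (a : ℂ) ^ (μ + 1) * Complex.Gamma (μ + 1))) := by
  have hintunit : IntervalIntegrable (fun s => g (a * s)) volume 0 1 := by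
    simpa [ha.ne'] using hint.comp_mul_left (c := a)
  have hunit := (tendsto_cpow_mul_integral_mul_one_sub_pow hμ hintunit
    (tendsto_comp_mul_div_cpow ha hL)).const_mul (a : ℂ)
  have ha' : (a : ℂ) ≠ 0 := ofReal_ne_zero.2 ha.ne'
  have hconst : (a : ℂ) * ((a : ℂ) ^ μ * L * Complex.Gamma (μ + 1)) =
      L * (a : ℂ) ^ (μ + 1) * Complex.Gamma (μ + 1) := by
    rw [cpow_add _ _ ha', cpow_one]
    ring
  rw [hconst] at hunit
  refine hunit.congr fun n => ?_
  have hsubst : ∫ t in (0 : ℝ)..a, g t * ((a - t : ℝ) : ℂ) ^ n =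
      a * ((a : ℂ) ^ n * ∫ s in (0 : ℝ)..1, g (a * s) * ((1 - s : ℝ) : ℂ) ^ n) := by
    have h := smul_integral_comp_mul_left (a := 0) (b := 1)
      (fun t => g t * ((a - t : ℝ) : ℂ) ^ n) a
    rw [mul_zero, mul_one, real_smul] at h
    rw [← h, ← intervalIntegral.integral_const_mul ((a : ℂ) ^ n)]
    refine congrArg ((a : ℂ) * ·) (intervalIntegral.integral_congr fun s _ => ?_)
    push_cast
    rw [← mul_one_sub, mul_pow]
    ring
  rw [hsubst]
  field_simp

end EndpointContribution

section EndpointTerm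

/-- The order of magnitude `a ^ n * n ^ (-(r + 1))` of the `n`-th moment contributed by an endpoint
at distance `a` from the origin at which the density behaves like the power `r` of the distance to
the endpoint. -/
noncomputable def endpointScale (a r : ℝ) (n : ℕ) : ℝ :=
  a ^ n * (n : ℝ) ^ (-(r + 1))

/-- The leading term of `∫ t in 0..a, g t * (a - t) ^ n`, where `g t` is asymptotic to `L * t ^ μ`
as `t` tends to `0` from the right. -/
noncomputable def endpointTerm (a : ℝ) (μ L : ℂ) (n : ℕ) : ℂ :=
  L * (a : ℂ) ^ (μ + 1) * Complex.Gamma (μ + 1) * ((a : ℂ) ^ n * (n : ℂ) ^ (-(μ + 1)))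

variable {a b r s : ℝ} {μ L : ℂ}

theorem pow_mul_cpow_neg_isTheta_endpointScale :
    (fun n : ℕ => (a : ℂ) ^ n * (n : ℂ) ^ (-(μ + 1))) =Θ[atTop] endpointScale a μ.re := by
  refine IsTheta.of_norm_eventuallyEq_norm ?_
  filter_upwards [eventually_gt_atTop 0] with n hn
  rw [endpointScale, norm_mul, norm_mul, norm_pow, norm_pow, norm_natCast_cpow_of_pos hn,
    norm_real, Real.norm_of_nonneg (rpow_nonneg n.cast_nonneg _), neg_re, add_re, one_re]

theorem endpointTerm_isTheta (ha : 0 < a) (hμ : -1 < μ.re) (hL : L ≠ 0) :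
    endpointTerm a μ L =Θ[atTop] endpointScale a μ.re := by
  have hΓ : Complex.Gamma (μ + 1) ≠ 0 := Gamma_ne_zero_of_re_pos (by simpa using by linarith)
  have hcpow : (a : ℂ) ^ (μ + 1) ≠ 0 := by simp [cpow_eq_zero_iff, ha.ne']
  exact pow_mul_cpow_neg_isTheta_endpointScale.const_mul_left
    (mul_ne_zero (mul_ne_zero hL hcpow) hΓ)

theorem integral_mul_sub_pow_sub_endpointTerm_isLittleO {g : ℝ → ℂ} (ha : 0 < a) (hμ : -1 < μ.re)
    (hint : IntervalIntegrable g volume 0 a)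
    (hL : Tendsto (fun t : ℝ => g t / (t : ℂ) ^ μ) (𝓝[>] 0) (𝓝 L)) :
    (fun n : ℕ => (∫ t in (0 : ℝ)..a, g t * ((a - t : ℝ) : ℂ) ^ n) - endpointTerm a μ L n)
      =o[atTop] endpointScale a μ.re := by
  have hnormalized := (tendsto_cpow_mul_integral_mul_sub_pow ha hμ hint hL).sub_const
    (L * (a : ℂ) ^ (μ + 1) * Complex.Gamma (μ + 1))
  rw [sub_self, ← isLittleO_one_iff ℝ] at hnormalized
  have hscale := (pow_mul_cpow_neg_isTheta_endpointScale (a := a) (μ := μ)).isBigO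
  refine (hscale.mul_isLittleO hnormalized).congr' ?_ (by simp)
  filter_upwards [eventually_gt_atTop 0] with n hn
  have hn' : (n : ℂ) ^ (μ + 1) ≠ 0 := by simp [cpow_eq_zero_iff, hn.ne']
  have ha' : (a : ℂ) ≠ 0 := ofReal_ne_zero.2 ha.ne'
  rw [endpointTerm, cpow_neg]
  field_simp

theorem endpointScale_isLittleO (ha : 0 < a) (h : a < b ∨ a = b ∧ s < r) :
    endpointScale a r =o[atTop] endpointScale b s := by
  rcases h with hab | ⟨rfl, hsr⟩
  · exact isLittleO_pow_mul_rpow_of_lt ha hab _ _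
  · have hdecay : (fun n : ℕ => (n : ℝ) ^ (-(r - s))) =o[atTop] fun _ => (1 : ℝ) :=
      (isLittleO_one_iff ℝ).2
        ((tendsto_rpow_neg_atTop (sub_pos.2 hsr)).comp tendsto_natCast_atTop_atTop)
    refine ((isBigO_refl (endpointScale a s) atTop).mul_isLittleO hdecay).congr' ?_ (by simp)
    filter_upwards [eventually_gt_atTop 0] with n hn
    rw [endpointScale, mul_assoc, ← rpow_add (by positivity), endpointScale]
    ring_nf

end EndpointTerm

section Moments

/-- The sum of the leading terms contributed to the `n`-th moment by the endpoints `-a` and `b`,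
where the density is asymptotic to `p * (t + a) ^ μ` and `q * (b - t) ^ ν` respectively. -/
noncomputable def momentLeadingTerm (a b : ℝ) (μ ν p q : ℂ) (n : ℕ) : ℂ :=
  (-1) ^ n * endpointTerm a μ p n + endpointTerm b ν q n

variable {a b : ℝ} {μ ν p q : ℂ} {φ : ℝ → ℂ} {l : Filter ℕ}

theorem neg_one_pow_mul_isTheta (u : ℕ → ℂ) : (fun n => (-1) ^ n * u n) =Θ[l] u :=
  IsTheta.of_norm_eventuallyEq_norm (Eventually.of_forall fun n => by simp)

theorem endpointScale_isBigO_momentLeadingTerm_of_le_norm (hl : l ≤ atTop) (ha : 0 < a) {ε : ℝ}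
    (hε : 0 < ε)
    (hnondeg : ∀ᶠ n : ℕ in l, ε ≤ ‖(-1) ^ n * p * Complex.Gamma (μ + 1) +
      q * Complex.Gamma (ν + 1) * (a : ℂ) ^ (ν - μ) * (n : ℂ) ^ (μ - ν)‖) :
    endpointScale a μ.re =O[l] momentLeadingTerm a a μ ν p q := by
  have ha' : (a : ℂ) ≠ 0 := ofReal_ne_zero.2 ha.ne'
  have hcpow : (a : ℂ) ^ (μ + 1) ≠ 0 := by simp [cpow_eq_zero_iff, ha']
  have hbelow : (fun _ : ℕ => (1 : ℝ)) =O[l] fun n => (a : ℂ) ^ (μ + 1) *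
      ((-1) ^ n * p * Complex.Gamma (μ + 1) +
        q * Complex.Gamma (ν + 1) * (a : ℂ) ^ (ν - μ) * (n : ℂ) ^ (μ - ν)) := by
    refine .const_mul_right hcpow (.of_bound ε⁻¹ ?_)
    filter_upwards [hnondeg] with n hn
    rw [norm_one, ← inv_mul_cancel₀ hε.ne']
    gcongr
  refine (((pow_mul_cpow_neg_isTheta_endpointScale (a := a) (μ := μ)).mono hl).isBigO_symm.mul
    hbelow).congr' (by simp) ?_
  filter_upwards [hl (eventually_ne_atTop 0)] with n hn
  have hn' : (n : ℂ) ≠ 0 := Nat.cast_ne_zero.2 hn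
  have hasplit : (a : ℂ) ^ (ν + 1) = (a : ℂ) ^ (μ + 1) * (a : ℂ) ^ (ν - μ) := by
    rw [← cpow_add _ _ ha']
    ring_nf
  have hnsplit : (n : ℂ) ^ (-(ν + 1)) = (n : ℂ) ^ (-(μ + 1)) * (n : ℂ) ^ (μ - ν) := by
    rw [← cpow_add _ _ hn']
    ring_nf
  rw [momentLeadingTerm, endpointTerm, endpointTerm, hasplit, hnsplit]
  ring

theorem endpointScale_isBigO_momentLeadingTerm (hl : l ≤ atTop) (ha : 0 < a) (hb : 0 < b)
    (hμ : -1 < μ.re) (hν : -1 < ν.re) (hp : p ≠ 0) (hq : q ≠ 0)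
    (hnondeg : a = b ∧ μ.re = ν.re → ∃ ε > (0 : ℝ), ∀ᶠ n : ℕ in l,
      ε ≤ ‖(-1) ^ n * p * Complex.Gamma (μ + 1) +
        q * Complex.Gamma (ν + 1) * (a : ℂ) ^ (ν - μ) * (n : ℂ) ^ (μ - ν)‖) :
    endpointScale a μ.re =O[l] momentLeadingTerm a b μ ν p q ∧
      endpointScale b ν.re =O[l] momentLeadingTerm a b μ ν p q := by
  have hleft := (neg_one_pow_mul_isTheta _).trans (endpointTerm_isTheta ha hμ hp)
  have hright := endpointTerm_isTheta hb hν hq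
  by_cases hbalanced : a = b ∧ μ.re = ν.re
  · obtain ⟨ε, hε, hε'⟩ := hnondeg hbalanced
    obtain ⟨rfl, hre⟩ := hbalanced
    have hscale := endpointScale_isBigO_momentLeadingTerm_of_le_norm hl ha hε hε'
    exact ⟨hscale, hre ▸ hscale⟩
  · have hdominant : (a < b ∨ a = b ∧ ν.re < μ.re) ∨ (b < a ∨ b = a ∧ μ.re < ν.re) := by grind
    rcases hdominant with h | h
    · have hscale := endpointScale_isLittleO ha h
      have hterm := hleft.trans_isLittleO (hscale.trans_isTheta hright.symm)
      have hdom := (hright.isBigO_symm.trans hterm.right_isBigO_add).mono hl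
      exact ⟨(hscale.mono hl).isBigO.trans hdom, hdom⟩
    · have hscale := endpointScale_isLittleO hb h
      have hterm := hright.trans_isLittleO (hscale.trans_isTheta hleft.symm)
      have hdom := (hleft.isBigO_symm.trans hterm.right_isBigO_add').mono hl
      exact ⟨hdom, (hscale.mono hl).isBigO.trans hdom⟩

theorem integral_mul_pow_eq_add (hleft : IntervalIntegrable φ volume (-a) 0)
    (hright : IntervalIntegrable φ volume 0 b) (n : ℕ) :
    ∫ t in (-a)..b, φ t * (t : ℂ) ^ n =
      (-1) ^ n * (∫ t in (0 : ℝ)..a, φ (t - a) * ((a - t : ℝ) : ℂ) ^ n) +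
        ∫ t in (0 : ℝ)..b, φ (b - t) * ((b - t : ℝ) : ℂ) ^ n := by
  have hpow (x y : ℝ) : ContinuousOn (fun t : ℝ => (t : ℂ) ^ n) (uIcc x y) := by fun_prop
  rw [← integral_add_adjacent_intervals (hleft.mul_continuousOn (hpow _ _))
    (hright.mul_continuousOn (hpow _ _))]
  congr 1
  · have hshift := integral_comp_sub_right (a := 0) (b := a) (fun t : ℝ => φ t * (t : ℂ) ^ n) a
    rw [zero_sub, sub_self] at hshift
    rw [← hshift, ← intervalIntegral.integral_const_mul]
    refine intervalIntegral.integral_congr fun t _ => ?_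
    have hneg : ((t - a : ℝ) : ℂ) = -1 * ((a - t : ℝ) : ℂ) := by push_cast; ring
    simp only [hneg, mul_pow]
    ring
  · have hreflect := integral_comp_sub_left (a := 0) (b := b) (fun t : ℝ => φ t * (t : ℂ) ^ n) b
    rwa [sub_zero, sub_self, eq_comm] at hreflect

theorem integral_mul_pow_isEquivalent_momentLeadingTerm (hl : l ≤ atTop) (ha : 0 < a)
    (hb : 0 < b) (hμ : -1 < μ.re) (hν : -1 < ν.re) (hleft : IntervalIntegrable φ volume (-a) 0)
    (hright : IntervalIntegrable φ volume 0 b)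
    (hφleft : Tendsto (fun t : ℝ => φ (t - a) / (t : ℂ) ^ μ) (𝓝[>] 0) (𝓝 p))
    (hφright : Tendsto (fun t : ℝ => φ (b - t) / (t : ℂ) ^ ν) (𝓝[>] 0) (𝓝 q))
    (hscaleleft : endpointScale a μ.re =O[l] momentLeadingTerm a b μ ν p q)
    (hscaleright : endpointScale b ν.re =O[l] momentLeadingTerm a b μ ν p q) :
    (fun n : ℕ => ∫ t in (-a)..b, φ t * (t : ℂ) ^ n) ~[l] momentLeadingTerm a b μ ν p q := by
  have hintleft : IntervalIntegrable (fun t => φ (t - a)) volume 0 a := by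
    simpa using hleft.comp_sub_right a
  have hintright : IntervalIntegrable (fun t => φ (b - t)) volume 0 b := by
    simpa using (hright.comp_sub_left b).symm
  have herrleft := ((integral_mul_sub_pow_sub_endpointTerm_isLittleO ha hμ hintleft
    hφleft).mono hl).trans_isBigO hscaleleft
  have herrright := ((integral_mul_sub_pow_sub_endpointTerm_isLittleO hb hν hintright
    hφright).mono hl).trans_isBigO hscaleright
  refine (((neg_one_pow_mul_isTheta _).trans_isLittleO herrleft).add herrright).congr_left
    fun n => ?_
  rw [Pi.sub_apply, integral_mul_pow_eq_add hleft hright, momentLeadingTerm]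
  ring

theorem integral_mul_pow_isBigO_max_pow (ha : 0 < a) (hb : 0 < b)
    (hint : IntervalIntegrable φ volume (-a) b) :
    (fun n : ℕ => ∫ t in (-a)..b, φ t * (t : ℂ) ^ n) =O[atTop] fun n : ℕ =>
      (max a b) ^ n * (n : ℝ) ^ (0 : ℝ) := by
  refine .of_bound (∫ t in (-a)..b, ‖φ t‖) (Eventually.of_forall fun n => ?_)
  rw [rpow_zero, mul_one, norm_pow, Real.norm_of_nonneg (by positivity), mul_comm,
    ← intervalIntegral.integral_const_mul]
  refine norm_integral_le_of_norm_le (by linarith) (ae_of_all _ fun t ht => ?_)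
    (hint.norm.const_mul _)
  have hmax : |t| ≤ max a b :=
    abs_le'.2 ⟨le_max_of_le_right ht.2, le_max_of_le_left (neg_le.1 ht.1.le)⟩
  rw [norm_mul, norm_pow, norm_real, Real.norm_eq_abs, mul_comm]
  gcongr

theorem exists_max_pow_mul_rpow_isBigO {r s : ℝ} {f : ℕ → ℂ}
    (h₁ : endpointScale a r =O[l] f) (h₂ : endpointScale b s =O[l] f) :
    ∃ κ : ℝ, (fun n : ℕ => (max a b) ^ n * (n : ℝ) ^ κ) =O[l] f := by
  rcases max_choice a b with h | h
  · exact ⟨_, by rw [h]; exact h₁⟩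
  · exact ⟨_, by rw [h]; exact h₂⟩

end Moments

theorem tendsto_comp_div_cpow_of_eqOn {g f : ℝ → ℂ} {μ : ℂ} {x : ℝ} (hx : 0 < x)
    (hg : ∀ t ∈ Ioc 0 x, g t = (t : ℂ) ^ μ * f t) (hf : ContinuousAt f 0) :
    Tendsto (fun t : ℝ => g t / (t : ℂ) ^ μ) (𝓝[>] 0) (𝓝 (f 0)) := by
  refine (hf.tendsto.mono_left nhdsWithin_le_nhds).congr' ?_
  filter_upwards [Ioc_mem_nhdsGT hx] with t ht
  have ht0 : (t : ℂ) ^ μ ≠ 0 := by simp [cpow_eq_zero_iff, ht.1.ne']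
  rw [hg t ht, mul_div_cancel_left₀ _ ht0]

theorem coefficient_growth_and_order_one_general {a b : ℝ} (ha : 0 < a) (hb : 0 < b)
    {μ ν p q : ℂ} (hμ : -1 < μ.re) (hν : -1 < ν.re) (hp : p ≠ 0) (hq : q ≠ 0)
    {φ : ℝ → ℂ} (hint : IntervalIntegrable φ volume (-a) b)
    (hφleft : Tendsto (fun t : ℝ => φ (t - a) / (t : ℂ) ^ μ) (𝓝[>] 0) (𝓝 p))
    (hφright : Tendsto (fun t : ℝ => φ (b - t) / (t : ℂ) ^ ν) (𝓝[>] 0) (𝓝 q))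
    {A : ℕ → ℂ}
    (hA : ∀ n : ℕ, A n = (1 / (n.factorial : ℂ)) * ∫ t in (-a)..b, φ t * (t : ℂ) ^ n)
    {l : Filter ℕ} [l.NeBot] (hl : l ≤ atTop)
    (hnondeg : a = b ∧ μ.re = ν.re → ∃ ε > (0 : ℝ), ∀ᶠ n : ℕ in l,
      ε ≤ ‖(-1) ^ n * p * Complex.Gamma (μ + 1) +
        q * Complex.Gamma (ν + 1) * (a : ℂ) ^ (ν - μ) * (n : ℂ) ^ (μ - ν)‖) :
    Tendsto (fun n : ℕ => ‖A n‖ ^ (-(1 : ℝ) / n) / (n / (Real.exp 1 * max a b))) l (𝓝 1) ∧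
      limsup (fun n : ℕ => Real.log n / Real.log (‖A n‖ ^ (-(1 : ℝ) / n))) atTop = 1 := by
  have hmem : (0 : ℝ) ∈ uIcc (-a) b := Icc_subset_uIcc ⟨by linarith, hb.le⟩
  obtain ⟨hscaleleft, hscaleright⟩ :=
    endpointScale_isBigO_momentLeadingTerm hl ha hb hμ hν hp hq hnondeg
  have hequiv := integral_mul_pow_isEquivalent_momentLeadingTerm hl ha hb hμ hν
    (hint.mono_set (uIcc_subset_uIcc_left hmem)) (hint.mono_set (uIcc_subset_uIcc_right hmem))
    hφleft hφright hscaleleft hscaleright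
  obtain ⟨κ, hlower⟩ := exists_max_pow_mul_rpow_isBigO hscaleleft hscaleright
  exact tendsto_and_limsup_eq_one_of_eq_factorial_inv_mul hl (lt_max_of_lt_left ha) hA
    (integral_mul_pow_isBigO_max_pow ha hb hint) (hlower.trans hequiv.isBigO_symm)

/-- The Taylor coefficients of `F` satisfy `|a_n|^{-1/n} ∼ n/(ec)` along the
nondegenerate subsequence, and the order of the entire function `F` equals `1`. -/
theorem coefficient_growth_and_order_one
    (a b : ℝ) (ha : 0 < a) (hb : 0 < b) (c : ℝ) (hc : c = max a b)
    (μ ν : ℂ) (hμ : -1 < μ.re) (hν : -1 < ν.re)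
    (φ f₁ f₂ : ℝ → ℂ)
    (hint : IntervalIntegrable φ volume (-a) b)
    (hφ₁ : ∀ t ∈ Set.Icc (-a) b, φ t = ((t + a : ℝ) : ℂ) ^ μ * f₁ (t + a))
    (hφ₂ : ∀ t ∈ Set.Icc (-a) b, φ t = ((b - t : ℝ) : ℂ) ^ ν * f₂ (b - t))
    (hf₁0 : f₁ 0 ≠ 0) (hf₂0 : f₂ 0 ≠ 0)
    (hf₁ : ∃ δ > (0 : ℝ), (∀ t ∈ Set.Icc (0 : ℝ) δ, DifferentiableAt ℝ f₁ t) ∧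
          ∃ M : ℝ, ∀ t ∈ Set.Icc (0 : ℝ) δ, ‖deriv f₁ t‖ ≤ M)
    (hf₂ : ∃ δ > (0 : ℝ), (∀ t ∈ Set.Icc (0 : ℝ) δ, DifferentiableAt ℝ f₂ t) ∧
          ∃ M : ℝ, ∀ t ∈ Set.Icc (0 : ℝ) δ, ‖deriv f₂ t‖ ≤ M)
    (A : ℕ → ℂ)
    (hA : ∀ n : ℕ, A n = (1 / (n.factorial : ℂ)) * ∫ t in (-a)..b, φ t * (t : ℂ) ^ n)
    (N : ℕ → ℕ) (hN : StrictMono N)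
    (hnondeg : (a = b ∧ μ.re = ν.re) →
      ∃ ε > (0 : ℝ), ∀ k : ℕ,
        ε ≤ ‖(-1 : ℂ) ^ (N k) * f₁ 0 * Complex.Gamma (μ + 1) +
              f₂ 0 * Complex.Gamma (ν + 1) * (a : ℂ) ^ (ν - μ) * (N k : ℂ) ^ (μ - ν)‖) :
    Tendsto (fun k : ℕ =>
        ‖A (N k)‖ ^ (-(1 : ℝ) / (N k)) / ((N k : ℝ) / (Real.exp 1 * c)))
      atTop (nhds 1) ∧
    Filter.limsup (fun n : ℕ =>
        Real.log n / Real.log (‖A n‖ ^ (-(1 : ℝ) / n))) atTop = 1 := by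
  subst hc
  obtain ⟨δ₁, hδ₁, hdiff₁, -⟩ := hf₁
  obtain ⟨δ₂, hδ₂, hdiff₂, -⟩ := hf₂
  have hφleft : Tendsto (fun t : ℝ => φ (t - a) / (t : ℂ) ^ μ) (𝓝[>] 0) (𝓝 (f₁ 0)) :=
    tendsto_comp_div_cpow_of_eqOn (add_pos ha hb)
      (fun t ht => by simpa using hφ₁ (t - a) ⟨by linarith [ht.1], by linarith [ht.2]⟩)
      (hdiff₁ 0 (left_mem_Icc.2 hδ₁.le)).continuousAt
  have hφright : Tendsto (fun t : ℝ => φ (b - t) / (t : ℂ) ^ ν) (𝓝[>] 0) (𝓝 (f₂ 0)) :=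
    tendsto_comp_div_cpow_of_eqOn (add_pos ha hb)
      (fun t ht => by simpa using hφ₂ (b - t) ⟨by linarith [ht.2], by linarith [ht.1]⟩)
      (hdiff₂ 0 (left_mem_Icc.2 hδ₂.le)).continuousAt
  obtain ⟨hgrowth, horder⟩ := coefficient_growth_and_order_one_general ha hb hμ hν hf₁0 hf₂0
    hint hφleft hφright hA hN.tendsto_atTop (fun h => (hnondeg h).imp fun _ ⟨hε, hle⟩ =>
      ⟨hε, eventually_map.2 (Eventually.of_forall hle)⟩)
  exact ⟨tendsto_map'_iff.1 hgrowth, horder⟩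
end

section
/- For Re α > -1/2, the Bessel function of the first kind satisfies Poisson's integral representation: J_α(z) = (z/2)^α / (Γ(α + 1/2) Γ(1/2)) · ∫_{-1}^{1} (1 - t²)^{α - 1/2} e^{izt} dt. -/
open MeasureTheory intervalIntegral Complex

/-! Expand `exp (I * z * t)` in powers of `t` and integrate term by term against the even weight
`(1 - t²) ^ (α - 1/2)`. The odd moments vanish, and the substitution `u = t²` turns the moment of
order `2k` into the Beta integral `B(k + 1/2, α + 1/2)`, whose Gamma quotient becomes the `k`-th
Bessel coefficient through the duplication formula for `Γ(k + 1/2)`. -/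

section Parity

variable {E : Type*} [NormedAddCommGroup E] {f : ℝ → E} {a : ℝ}

lemma intervalIntegrable_neg_self_of_even (hf : f.Even) (hfi : IntervalIntegrable f volume 0 a) :
    IntervalIntegrable f volume (-a) a := by
  refine IntervalIntegrable.trans (b := 0) ?_ hfi
  rw [IntervalIntegrable.iff_comp_neg]
  simpa only [hf.eq, neg_neg, neg_zero] using hfi.symm

variable [NormedSpace ℝ E]

lemma integral_neg_self_of_odd (hf : f.Odd) : ∫ t in -a..a, f t = 0 := by
  have h_refl := integral_comp_neg (a := -a) (b := a) f
  simp only [hf.eq, intervalIntegral.integral_neg, neg_neg] at h_refl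
  have := IsAddTorsionFree.of_isTorsionFree ℝ E
  exact self_eq_neg.mp h_refl.symm

lemma integral_neg_self_of_even (hf : f.Even) :
    ∫ t in -a..a, f t = (2 : ℝ) • ∫ t in (0 : ℝ)..a, f t := by
  by_cases hfi : IntervalIntegrable f volume 0 a
  · have h_symm := intervalIntegrable_neg_self_of_even hf hfi
    have h_refl : ∫ t in -a..0, f t = ∫ t in (0 : ℝ)..a, f t := by
      simpa only [hf.eq, neg_zero] using (integral_comp_neg (a := 0) (b := a) f).symm
    rw [← integral_add_adjacent_intervals (h_symm.trans hfi.symm) hfi, h_refl, two_smul]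
  · have h_zero : (0 : ℝ) ∈ Set.uIcc (-a) a := by
      rw [Set.mem_uIcc]
      rcases le_total 0 a with ha | ha <;> simp [ha]
    have h_symm : ¬IntervalIntegrable f volume (-a) a := fun h ↦
      hfi (h.mono_set (Set.uIcc_subset_uIcc h_zero Set.right_mem_uIcc))
    rw [integral_undef hfi, integral_undef h_symm, smul_zero]

end Parity

lemma hasSum_comp_two_mul_iff {M : Type*} [AddCommMonoid M] [TopologicalSpace M] {f : ℕ → M}
    {m : M} (hf : ∀ n, Odd n → f n = 0) : HasSum (fun k ↦ f (2 * k)) m ↔ HasSum f m := by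
  refine (mul_right_injective₀ two_ne_zero).hasSum_iff fun n hn ↦ hf n ?_
  rw [← Nat.not_even_iff_odd]
  intro h_even
  obtain ⟨k, rfl⟩ := h_even.two_dvd
  exact hn ⟨k, rfl⟩

lemma hasSum_integral_mul_exp {μ : Measure ℝ} {w : ℝ → ℂ} {a b : ℝ}
    (hw : IntervalIntegrable w μ a b) (c : ℂ) :
    HasSum (fun n : ℕ ↦ c ^ n / n.factorial * ∫ t in a..b, w t * (t : ℂ) ^ n ∂μ)
      (∫ t in a..b, w t * exp (c * t) ∂μ) := by
  simp only [← intervalIntegral.integral_const_mul]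
  set R := max |min a b| |max a b|
  have h_summable : Summable fun n : ℕ ↦ (‖c‖ * R) ^ n / (n.factorial : ℝ) :=
    Real.summable_pow_div_factorial _
  refine hasSum_integral_of_dominated_convergence
    (fun n t ↦ ‖w t‖ * ((‖c‖ * R) ^ n / n.factorial)) (fun n ↦ ?_)
    (fun n ↦ .of_forall fun t ht ↦ ?_) (.of_forall fun t _ ↦ h_summable.mul_left _) ?_
    (.of_forall fun t _ ↦ ?_)
  · exact ((hw.mul_continuousOn (by fun_prop)).const_mul _).def'.aestronglyMeasurable
  · have ht_le : |t| ≤ R := abs_le_max_abs_abs ht.1.le ht.2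
    calc ‖c ^ n / n.factorial * (w t * (t : ℂ) ^ n)‖
        = ‖w t‖ * ((‖c‖ * |t|) ^ n / n.factorial) := by
          simp only [norm_mul, norm_div, norm_pow, Complex.norm_natCast, norm_real,
            Real.norm_eq_abs]
          ring
      _ ≤ ‖w t‖ * ((‖c‖ * R) ^ n / n.factorial) := by gcongr
  · simpa only [tsum_mul_left] using hw.norm.mul_const _
  · convert! (NormedSpace.expSeries_div_hasSum_exp (c * t)).mul_left (w t) using 1
    · ext n
      ring
    · rw [exp_eq_exp_ℂ]

lemma ofReal_mul_sq_cpow {t : ℝ} (ht : 0 < t) (u : ℂ) :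
    (t : ℂ) * ((t : ℂ) ^ 2) ^ (u - 1) = (t : ℂ) ^ (2 * u - 1) := by
  have h_arg : (t : ℂ).arg = 0 := arg_ofReal_of_nonneg ht.le
  have h_sq : ((t : ℂ) ^ 2) ^ (u - 1) = (t : ℂ) ^ (2 * (u - 1)) :=
    (cpow_ofNat_mul' (by simp [h_arg, Real.pi_pos]) (by simp [h_arg, Real.pi_pos.le]) _).symm
  rw [h_sq, show 2 * u - 1 = 1 + 2 * (u - 1) by ring, cpow_add _ _ (by exact_mod_cast ht.ne'),
    cpow_one]

section Square

variable {E : Type*} [NormedAddCommGroup E] [NormedSpace ℝ E] {a : ℝ}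

lemma integral_two_mul_smul_comp_sq (ha : 0 ≤ a) (g : ℝ → E) :
    ∫ t in (0 : ℝ)..a, (2 * t) • g (t ^ 2) = ∫ x in (0 : ℝ)..a ^ 2, g x := by
  simpa using! integral_deriv_smul_comp_of_deriv_nonneg (a := 0) (b := a) (g := g)
    (continuous_pow 2).continuousOn (fun t _ ↦ by simpa using hasDerivAt_pow 2 t)
    (fun t ht ↦ by simpa [ha] using ht.1.le)

lemma intervalIntegrable_two_mul_smul_comp_sq_iff (ha : 0 ≤ a) {g : ℝ → E} :
    IntervalIntegrable (fun t ↦ (2 * t) • g (t ^ 2)) volume 0 a ↔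
      IntervalIntegrable g volume 0 (a ^ 2) := by
  simpa using! integrable_deriv_smul_comp_iff_of_deriv_nonneg (a := 0) (b := a) (g := g)
    (continuous_pow 2).continuousOn (fun t _ ↦ by simpa using hasDerivAt_pow 2 t)
    (fun t ht ↦ by simpa [ha] using ht.1.le)

end Square

section Beta

variable {u v : ℂ}

-- The endpoint `0` is excluded: for `u = 1/2` and `t = 0` the right-hand side has `0 ^ 0 = 1`.
lemma two_mul_smul_betaIntegrand_sq {t : ℝ} (ht : 0 < t) :
    (2 * t) • (((t ^ 2 : ℝ) : ℂ) ^ (u - 1) * (1 - ((t ^ 2 : ℝ) : ℂ)) ^ (v - 1)) =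
      2 * ((t : ℂ) ^ (2 * u - 1) * (1 - (t : ℂ) ^ 2) ^ (v - 1)) := by
  rw [real_smul, ← ofReal_mul_sq_cpow ht]
  push_cast
  ring

lemma two_mul_integral_cpow_mul_one_sub_sq_cpow :
    2 * ∫ t in (0 : ℝ)..1, (t : ℂ) ^ (2 * u - 1) * (1 - (t : ℂ) ^ 2) ^ (v - 1) =
      betaIntegral u v := by
  have h_sq := integral_two_mul_smul_comp_sq zero_le_one
    fun x : ℝ ↦ (x : ℂ) ^ (u - 1) * (1 - (x : ℂ)) ^ (v - 1)
  rw [one_pow, integral_congr_Ioo_of_le zero_le_one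
    fun t ht ↦ two_mul_smul_betaIntegrand_sq ht.1] at h_sq
  rw [← intervalIntegral.integral_const_mul, h_sq, betaIntegral]

lemma intervalIntegrable_cpow_mul_one_sub_sq_cpow (hu : 0 < u.re) (hv : 0 < v.re) :
    IntervalIntegrable (fun t : ℝ ↦ (t : ℂ) ^ (2 * u - 1) * (1 - (t : ℂ) ^ 2) ^ (v - 1))
      volume 0 1 := by
  have h_sq := (intervalIntegrable_two_mul_smul_comp_sq_iff zero_le_one).2
    (by simpa only [one_pow] using betaIntegral_convergent hu hv)
  have h_two := h_sq.congr_uIoo fun t ht ↦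
    two_mul_smul_betaIntegrand_sq (Set.uIoo_of_le (zero_le_one (α := ℝ)) ▸ ht).1
  simpa using h_two.const_mul 2⁻¹

end Beta

lemma Gamma_natCast_add_half (k : ℕ) :
    Gamma (k + 1 / 2) = (2 * k).factorial / (4 ^ k * k.factorial) * Gamma (1 / 2) := by
  have h_half : Gamma (1 / 2) = (√Real.pi : ℂ) := by
    rw [Gamma_one_half_eq, Real.sqrt_eq_rpow, ofReal_cpow Real.pi_pos.le]
    norm_num
  have h_pow : (2 : ℂ) ^ (-(2 * (k : ℂ))) = (4 ^ k)⁻¹ := by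
    rw [cpow_neg, ← Nat.cast_ofNat, ← Nat.cast_mul, cpow_natCast, pow_mul]
    norm_num
  have h_dup := Gamma_mul_Gamma_add_half (k + 1 / 2)
  rw [show (k : ℂ) + 1 / 2 + 1 / 2 = k + 1 by ring,
    show 2 * ((k : ℂ) + 1 / 2) = (2 * k : ℕ) + 1 by push_cast; ring,
    Gamma_nat_eq_factorial, Gamma_nat_eq_factorial,
    show (1 : ℂ) - ((2 * k : ℕ) + 1) = -(2 * k) by push_cast; ring, h_pow, ← h_half] at h_dup
  have h_fact : (k.factorial : ℂ) ≠ 0 := mod_cast k.factorial_ne_zero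
  field_simp at h_dup ⊢
  linear_combination h_dup

lemma betaIntegral_natCast_add_half_div {v : ℂ} (k : ℕ) (hv : 0 < v.re) :
    betaIntegral (k + 1 / 2) v / (Gamma v * Gamma (1 / 2)) =
      (2 * k).factorial / (4 ^ k * k.factorial * Gamma (k + 1 / 2 + v)) := by
  have hk : 0 < (k + 1 / 2 : ℂ).re := by
    simp only [add_re, natCast_re, one_div, inv_re, re_ofNat, normSq_ofNat]
    positivity
  have h_Gamma : Gamma v ≠ 0 := Gamma_ne_zero_of_re_pos hv
  have h_Gamma_half : Gamma (1 / 2) ≠ 0 := Gamma_ne_zero_of_re_pos (by simp)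
  rw [betaIntegral_eq_Gamma_mul_div _ _ hk hv, Gamma_natCast_add_half]
  field_simp

/-- The Gegenbauer weight `(1 - t²) ^ (α - 1/2)`, meant for `t ∈ [-1, 1]`: the kernel of Poisson's
integral. The power is complex, with base embedded from `ℝ`. -/
noncomputable def gegenbauerWeight (α : ℂ) (t : ℝ) : ℂ :=
  ((1 - t ^ 2 : ℝ) : ℂ) ^ (α - 1 / 2)

section Gegenbauer

variable (α : ℂ)

lemma gegenbauerWeight_even : (gegenbauerWeight α).Even := fun t ↦ by
  simp only [gegenbauerWeight, neg_sq]

lemma gegenbauerWeight_mul_pow (n : ℕ) (t : ℝ) :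
    gegenbauerWeight α t * (t : ℂ) ^ n =
      (t : ℂ) ^ (2 * ((n + 1) / 2 : ℂ) - 1) * (1 - (t : ℂ) ^ 2) ^ (α + 1 / 2 - 1) := by
  rw [show 2 * ((n + 1) / 2 : ℂ) - 1 = n by ring, show α + 1 / 2 - 1 = α - 1 / 2 by ring,
    cpow_natCast, mul_comm, gegenbauerWeight]
  push_cast
  rfl

lemma two_mul_integral_gegenbauerWeight_mul_pow (n : ℕ) :
    2 * ∫ t in (0 : ℝ)..1, gegenbauerWeight α t * (t : ℂ) ^ n =
      betaIntegral ((n + 1) / 2) (α + 1 / 2) := by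
  simp only [gegenbauerWeight_mul_pow, two_mul_integral_cpow_mul_one_sub_sq_cpow]

lemma integral_gegenbauerWeight_mul_pow_of_odd {n : ℕ} (hn : Odd n) :
    ∫ t in (-1 : ℝ)..1, gegenbauerWeight α t * (t : ℂ) ^ n = 0 :=
  integral_neg_self_of_odd fun t ↦ by
    rw [(gegenbauerWeight_even α).eq, ofReal_neg, hn.neg_pow, mul_neg]

lemma integral_gegenbauerWeight_mul_pow_two_mul (k : ℕ) :
    ∫ t in (-1 : ℝ)..1, gegenbauerWeight α t * (t : ℂ) ^ (2 * k) =
      betaIntegral (k + 1 / 2) (α + 1 / 2) := by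
  have h_even : Function.Even fun t : ℝ ↦ gegenbauerWeight α t * (t : ℂ) ^ (2 * k) := fun t ↦ by
    simp only [(gegenbauerWeight_even α).eq, ofReal_neg, (even_two_mul k).neg_pow]
  rw [integral_neg_self_of_even h_even, real_smul, ofReal_ofNat,
    two_mul_integral_gegenbauerWeight_mul_pow]
  congr 1
  push_cast
  ring

variable {α}

lemma re_add_half_pos (hα : -(1 / 2) < α.re) : 0 < (α + 1 / 2).re := by
  norm_num
  linarith

lemma intervalIntegrable_gegenbauerWeight (hα : -(1 / 2) < α.re) :
    IntervalIntegrable (gegenbauerWeight α) volume (-1) 1 := by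
  refine intervalIntegrable_neg_self_of_even (gegenbauerWeight_even α) ?_
  have h := intervalIntegrable_cpow_mul_one_sub_sq_cpow (u := ((0 : ℕ) + 1) / 2) (by simp)
    (re_add_half_pos hα)
  simpa only [← gegenbauerWeight_mul_pow, pow_zero, mul_one] using! h

lemma hasSum_integral_gegenbauerWeight_mul_exp (hα : -(1 / 2) < α.re) (z : ℂ) :
    HasSum
      (fun k : ℕ ↦ (I * z) ^ (2 * k) / (2 * k).factorial * betaIntegral (k + 1 / 2) (α + 1 / 2))
      (∫ t in (-1 : ℝ)..1, gegenbauerWeight α t * exp (I * z * t)) := by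
  have h := hasSum_integral_mul_exp (intervalIntegrable_gegenbauerWeight hα) (I * z)
  rw [← hasSum_comp_two_mul_iff fun n hn ↦ by
    rw [integral_gegenbauerWeight_mul_pow_of_odd α hn, mul_zero]] at h
  simpa only [integral_gegenbauerWeight_mul_pow_two_mul] using h

end Gegenbauer

lemma hasSum_bessel_series {α : ℂ} (hα : -(1 / 2) < α.re) (z : ℂ) :
    HasSum (fun k : ℕ ↦ (-1) ^ k / (Gamma (k + 1) * Gamma (k + α + 1)) * (z / 2) ^ (2 * k))
      ((∫ t in (-1 : ℝ)..1, gegenbauerWeight α t * exp (I * z * t)) /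
        (Gamma (α + 1 / 2) * Gamma (1 / 2))) := by
  convert! (hasSum_integral_gegenbauerWeight_mul_exp hα z).div_const _ using 1
  ext k
  have h_pow : (I * z) ^ (2 * k) = (-1) ^ k * 4 ^ k * (z / 2) ^ (2 * k) := by
    simp only [pow_mul, ← mul_pow]
    congr 1
    linear_combination z ^ 2 * I_sq
  have h_fact : ((2 * k).factorial : ℂ) ≠ 0 := mod_cast (2 * k).factorial_ne_zero
  rw [mul_div_assoc, betaIntegral_natCast_add_half_div k (re_add_half_pos hα),
    Gamma_nat_eq_factorial, h_pow, show (k : ℂ) + 1 / 2 + (α + 1 / 2) = k + α + 1 by ring]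
  field_simp

/-- Poisson's integral representation of the Bessel function of the first kind
`J_α(z) = (z/2)^α ∑_{k} (-1)^k/(Γ(k+1)Γ(k+α+1)) (z/2)^{2k}` for `Re α > -1/2`. -/
theorem poisson_integral_representation_bessel
    (α : ℂ) (hα : -(1 / 2) < α.re)
    (J : ℂ → ℂ)
    (hJ : ∀ z : ℂ, J z = (z / 2) ^ α *
      ∑' k : ℕ, (-1) ^ k /
        (Complex.Gamma (k + 1) * Complex.Gamma (k + α + 1)) * (z / 2) ^ (2 * k)) :
    ∀ z : ℂ,
      J z = (z / 2) ^ α / (Complex.Gamma (α + 1 / 2) * Complex.Gamma (1 / 2)) *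
        ∫ t in (-1 : ℝ)..1,
          ((1 - t ^ 2 : ℝ) : ℂ) ^ (α - 1 / 2) * Complex.exp (Complex.I * z * t) := by
  intro z
  rw [hJ, (hasSum_bessel_series hα z).tsum_eq, div_mul_eq_mul_div, mul_div_assoc]
  rfl
end

section
/- Let φ satisfy the Section 2 assumptions on [-a, b] with a, b > 0. Then as n → ∞, uniformly for z in compact subsets of ℂ \ ((-∞, -1/a] ∪ [1/b, ∞)), ∫_{-a}^{b} φ(t)/(1 - z t) · t^{n+1} dt = (-1)^{n+1} f₁(0)Γ(μ+1)/(1 + a z) · n^{-μ-1} a^{n+μ+2} + f₂(0)Γ(ν+1)/(1 - b z) · n^{-ν-1} b^{n+ν+2} + O(n^{-μ-2} a^n) + O(n^{-ν-2} b^n). -/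
open MeasureTheory intervalIntegral Complex Filter Asymptotics

/-!
This is Watson's lemma at the two endpoints, uniformly in `z`. Near `t = b`, substitute
`t = b * (1 - x)`, so that `t ^ (n + 1) = b ^ (n + 1) * (1 - x) ^ (n + 1)`, and compare
`(1 - x) ^ (n + 1)`, extended by zero beyond `x = 1`, with `exp (-n x)`: the difference is at most
`(x + n x ^ 2) * exp (-n x)` for all `x ≥ 0`, and each factor `x` gains `1 / n` after integration.
The leading amplitude `x ^ ν` then yields a Gamma integral, an amplitude of size `x ^ (ν + 1)`
gains a further factor `1 / n`, and the part away from the endpoint is exponentially small. On a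
compact set of parameters, `1 / (1 - z t)` is bounded and Lipschitz in `t`, uniformly in `z`, so
replacing it by its value at the endpoint only produces such a smaller amplitude. The endpoint
`-a` reduces to `a` by the reflection `t ↦ -t`, `z ↦ -z`.
-/

section LaplaceKernel

variable {x : ℝ}

lemma one_sub_pow_succ_le_exp_neg (n : ℕ) (hx₀ : 0 ≤ x) (hx₁ : x ≤ 1) :
    (1 - x) ^ (n + 1) ≤ Real.exp (-(n * x)) :=
  calc (1 - x) ^ (n + 1) ≤ (1 - x) ^ n :=
        pow_le_pow_of_le_one (by linarith) (by linarith) n.le_succ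
    _ ≤ Real.exp (-x) ^ n := pow_le_pow_left₀ (by linarith) (Real.one_sub_le_exp_neg x) n
    _ = Real.exp (-(n * x)) := by rw [← Real.exp_nat_mul]; ring_nf

-- Bernoulli's inequality for `(1 - x ^ 2) ^ n`, combined with `1 - x ^ 2 ≤ (1 - x) * exp x`.
lemma one_sub_sub_mul_exp_neg_le_pow_succ (n : ℕ) (hx₀ : 0 ≤ x) (hx₁ : x ≤ 1) :
    (1 - x - n * x ^ 2) * Real.exp (-(n * x)) ≤ (1 - x) ^ (n + 1) := by
  have hexp : Real.exp x ^ n * Real.exp (-(n * x)) = 1 := by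
    rw [← Real.exp_nat_mul, ← Real.exp_add, add_neg_cancel, Real.exp_zero]
  have bernoulli : 1 + n * -x ^ 2 ≤ ((1 - x) * Real.exp x) ^ n :=
    (one_add_mul_le_pow (by nlinarith) n).trans <|
      pow_le_pow_left₀ (by nlinarith) (by nlinarith [Real.add_one_le_exp x]) n
  have hcubic : 1 - x - n * x ^ 2 ≤ (1 - x) * (1 + n * -x ^ 2) := by
    have : 0 ≤ n * x ^ 3 := by positivity
    linarith
  calc (1 - x - n * x ^ 2) * Real.exp (-(n * x))
      ≤ (1 - x) * ((1 - x) * Real.exp x) ^ n * Real.exp (-(n * x)) := by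
        gcongr
        exact hcubic.trans (mul_le_mul_of_nonneg_left bernoulli (by linarith))
    _ = (1 - x) ^ (n + 1) * (Real.exp x ^ n * Real.exp (-(n * x))) := by rw [mul_pow]; ring
    _ = (1 - x) ^ (n + 1) := by rw [hexp, mul_one]

lemma max_one_sub_pow_succ_le_exp_neg (n : ℕ) (hx : 0 ≤ x) :
    max (1 - x) 0 ^ (n + 1) ≤ Real.exp (-(n * x)) := by
  rcases le_total x 1 with hx₁ | hx₁
  · rw [max_eq_left (by linarith)]
    exact one_sub_pow_succ_le_exp_neg n hx hx₁
  · rw [max_eq_right (by linarith), zero_pow n.succ_ne_zero]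
    exact (Real.exp_pos _).le

lemma abs_max_one_sub_pow_succ_sub_exp_neg_le (n : ℕ) (hx : 0 ≤ x) :
    |max (1 - x) 0 ^ (n + 1) - Real.exp (-(n * x))| ≤
      (x + n * x ^ 2) * Real.exp (-(n * x)) := by
  have hexp := Real.exp_pos (-(n * x))
  have hsq : 0 ≤ n * x ^ 2 * Real.exp (-(n * x)) := by positivity
  rcases le_total x 1 with hx₁ | hx₁
  · rw [max_eq_left (by linarith), abs_le]
    have hlower := one_sub_sub_mul_exp_neg_le_pow_succ n hx hx₁
    have hupper := one_sub_pow_succ_le_exp_neg n hx hx₁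
    constructor <;> nlinarith
  · rw [max_eq_right (by linarith), zero_pow n.succ_ne_zero, zero_sub, abs_neg, abs_of_pos hexp]
    nlinarith

lemma exists_exp_neg_mul_le_mul_rpow_neg {d : ℝ} (hd : 0 < d) (r : ℝ) :
    ∃ C : ℝ, ∀ n : ℕ, 0 < n → Real.exp (-(n * d)) ≤ C * (n : ℝ) ^ (-r) := by
  obtain ⟨C, hC⟩ := ((tendsto_rpow_mul_exp_neg_mul_atTop_nhds_zero r d hd).comp
    tendsto_natCast_atTop_atTop).bddAbove_range
  refine ⟨C, fun n hn => ?_⟩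
  have hn' : (0 : ℝ) < n := Nat.cast_pos.2 hn
  have hbound : (n : ℝ) ^ r * Real.exp (-(n * d)) ≤ C := by
    simpa [mul_comm d] using hC ⟨n, rfl⟩
  rwa [Real.rpow_neg hn'.le, ← div_eq_mul_inv, le_div_iff₀' (by positivity)]

end LaplaceKernel

section GammaIntegrals

variable {n : ℕ}

lemma integrableOn_rpow_mul_exp_neg_mul_s19 {p r : ℝ} (hp : -1 < p) (hr : 0 < r) :
    IntegrableOn (fun x : ℝ => x ^ p * Real.exp (-(r * x))) (Set.Ioi 0) := by
  simpa using integrableOn_rpow_mul_exp_neg_mul_rpow hp one_pos hr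

lemma integrableOn_cpow_mul_ofReal_of_abs_le_exp {u : ℂ} (hu : -1 < u.re) {r : ℝ} (hr : 0 < r)
    {k : ℝ → ℝ} (hk : Continuous k) (hle : ∀ x, 0 < x → |k x| ≤ Real.exp (-(r * x))) :
    IntegrableOn (fun x : ℝ => (x : ℂ) ^ u * k x) (Set.Ioi 0) := by
  refine (integrableOn_rpow_mul_exp_neg_mul_s19 hu hr).mono' ?_ ?_
  · refine ContinuousOn.aestronglyMeasurable (fun x hx => ?_) measurableSet_Ioi
    exact ((continuousAt_ofReal_cpow_const x u (Or.inr (ne_of_gt hx))).mul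
      (by fun_prop)).continuousWithinAt
  · refine ae_restrict_of_forall_mem measurableSet_Ioi fun x hx => ?_
    rw [norm_mul, norm_cpow_eq_rpow_re_of_pos hx, norm_real, Real.norm_eq_abs]
    exact mul_le_mul_of_nonneg_left (hle x hx) (Real.rpow_nonneg (le_of_lt hx) _)

lemma integral_rpow_mul_exp_neg_natCast_mul {p : ℝ} (hp : -1 < p) (hn : 0 < n) :
    ∫ x in Set.Ioi (0 : ℝ), x ^ p * Real.exp (-(n * x)) =
      Real.Gamma (p + 1) * (n : ℝ) ^ (-(p + 1)) := by
  have h := Real.integral_rpow_mul_exp_neg_mul_Ioi (a := p + 1) (r := n) (by linarith)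
    (Nat.cast_pos.2 hn)
  rw [add_sub_cancel_right] at h
  rw [h, one_div, Real.inv_rpow n.cast_nonneg, ← Real.rpow_neg n.cast_nonneg, mul_comm]

lemma integral_cpow_mul_exp_neg_natCast_mul {u : ℂ} (hu : 0 < u.re) (hn : 0 < n) :
    ∫ x in Set.Ioi (0 : ℝ), (x : ℂ) ^ (u - 1) * (Real.exp (-(n * x)) : ℂ) =
      Complex.Gamma u * (n : ℂ) ^ (-u) := by
  have h := integral_cpow_mul_exp_neg_mul_Ioi hu (r := n) (Nat.cast_pos.2 hn)
  rw [one_div, ofReal_natCast, inv_cpow _ _ (by rw [natCast_arg]; exact Real.pi_ne_zero.symm),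
    ← cpow_neg, mul_comm] at h
  rw [← h]
  push_cast
  rfl

lemma betaIntegral_natCast_add_two (u : ℂ) (n : ℕ) :
    betaIntegral u (n + 2) = ∫ x in (0 : ℝ)..1, (x : ℂ) ^ (u - 1) * (1 - x : ℂ) ^ (n + 1) := by
  have hexponent : (n + 2 - 1 : ℂ) = (n + 1 : ℕ) := by push_cast; ring
  simp only [betaIntegral, hexponent, cpow_natCast]

lemma betaIntegral_natCast_add_two_eq_integral_Ioi (u : ℂ) (n : ℕ) :
    betaIntegral u (n + 2) =
      ∫ x in Set.Ioi (0 : ℝ), (x : ℂ) ^ (u - 1) * ((max (1 - x) 0 ^ (n + 1) : ℝ) : ℂ) := by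
  rw [betaIntegral_natCast_add_two, intervalIntegral.integral_of_le zero_le_one,
    setIntegral_eq_of_subset_of_forall_sdiff_eq_zero measurableSet_Ioi
      (Set.Ioc_subset_Ioi_self : Set.Ioc (0 : ℝ) 1 ⊆ Set.Ioi 0) fun x hx => ?_]
  · refine setIntegral_congr_fun measurableSet_Ioc fun x hx => ?_
    simp [max_eq_left (sub_nonneg.2 hx.2)]
  · have hx₁ : 1 < x := by simpa [Set.mem_Ioi.1 hx.1] using hx.2
    simp [hx₁.le]

lemma norm_cpow_mul_sub_cpow_mul_exp_neg_le (u : ℂ) (n : ℕ) {x : ℝ} (hx : 0 < x) :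
    ‖(x : ℂ) ^ (u - 1) * ((max (1 - x) 0 ^ (n + 1) : ℝ) : ℂ) -
        (x : ℂ) ^ (u - 1) * (Real.exp (-(n * x)) : ℂ)‖ ≤
      x ^ u.re * Real.exp (-(n * x)) + n * (x ^ (u.re + 1) * Real.exp (-(n * x))) := by
  have hpow : x ^ u.re = x ^ (u.re - 1) * x := by
    rw [← Real.rpow_add_one hx.ne', sub_add_cancel]
  calc ‖(x : ℂ) ^ (u - 1) * ((max (1 - x) 0 ^ (n + 1) : ℝ) : ℂ) -
          (x : ℂ) ^ (u - 1) * (Real.exp (-(n * x)) : ℂ)‖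
      = x ^ (u.re - 1) * |max (1 - x) 0 ^ (n + 1) - Real.exp (-(n * x))| := by
        rw [← mul_sub, ← ofReal_sub, norm_mul, norm_cpow_eq_rpow_re_of_pos hx, norm_real,
          Real.norm_eq_abs, sub_re, one_re]
    _ ≤ x ^ (u.re - 1) * ((x + n * x ^ 2) * Real.exp (-(n * x))) := by
        gcongr
        exact abs_max_one_sub_pow_succ_sub_exp_neg_le n hx.le
    _ = x ^ u.re * Real.exp (-(n * x)) + n * (x ^ (u.re + 1) * Real.exp (-(n * x))) := by
        rw [Real.rpow_add_one hx.ne', hpow]; ring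

lemma norm_betaIntegral_sub_Gamma_mul_cpow_le {u : ℂ} (hu : 0 < u.re) (hn : 0 < n) :
    ‖betaIntegral u (n + 2) - Complex.Gamma u * (n : ℂ) ^ (-u)‖ ≤
      (Real.Gamma (u.re + 1) + Real.Gamma (u.re + 2)) * (n : ℝ) ^ (-(u.re + 1)) := by
  have hn' : (0 : ℝ) < n := Nat.cast_pos.2 hn
  have hre : -1 < (u - 1).re := by simpa using hu
  have hpow : (n : ℝ) ^ (-(u.re + 1)) = n * (n : ℝ) ^ (-(u.re + 1 + 1)) := by
    rw [← Real.rpow_one_add' hn'.le (by linarith)]; ring_nf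
  have hint₁ := integrableOn_rpow_mul_exp_neg_mul_s19 (p := u.re) (by linarith) hn'
  have hint₂ := (integrableOn_rpow_mul_exp_neg_mul_s19 (p := u.re + 1) (by linarith) hn').const_mul
    (n : ℝ)
  rw [betaIntegral_natCast_add_two_eq_integral_Ioi,
    ← integral_cpow_mul_exp_neg_natCast_mul hu hn,
    ← integral_sub
      (integrableOn_cpow_mul_ofReal_of_abs_le_exp hre hn' (by fun_prop) fun x hx => by
        rw [abs_of_nonneg (by positivity)]
        exact max_one_sub_pow_succ_le_exp_neg n hx.le)
      (integrableOn_cpow_mul_ofReal_of_abs_le_exp hre hn' (by fun_prop) fun x _ =>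
        (Real.abs_exp _).le)]
  refine (MeasureTheory.norm_integral_le_of_norm_le (hint₁.add hint₂) <|
    ae_restrict_of_forall_mem measurableSet_Ioi fun x hx =>
      norm_cpow_mul_sub_cpow_mul_exp_neg_le u n hx).trans_eq ?_
  simp only [Pi.add_apply]
  rw [integral_add hint₁ hint₂, MeasureTheory.integral_const_mul,
    integral_rpow_mul_exp_neg_natCast_mul (by linarith) hn,
    integral_rpow_mul_exp_neg_natCast_mul (by linarith) hn, add_mul, hpow]
  ring_nf

end GammaIntegrals

section WatsonLemma

variable {ν : ℂ} {d : ℝ} {n : ℕ}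

lemma norm_mul_one_sub_pow_le_add {h : ℝ → ℂ} {p L : ℝ} (hL : 0 ≤ L)
    (hh : ∀ x ∈ Set.Ioc 0 d, ‖h x‖ ≤ L * x ^ p) (n : ℕ) {x : ℝ} (hx : x ∈ Set.Ioc (0 : ℝ) 1) :
    ‖h x * (1 - x : ℂ) ^ (n + 1)‖ ≤
      L * (x ^ p * Real.exp (-(n * x))) + Real.exp (-(n * d)) * ‖h x‖ := by
  obtain ⟨hx₀, hx₁⟩ := hx
  have hkernel : ‖(1 - x : ℂ) ^ (n + 1)‖ ≤ Real.exp (-(n * x)) := by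
    rw [← ofReal_one, ← ofReal_sub, norm_pow, norm_real, Real.norm_of_nonneg (sub_nonneg.2 hx₁)]
    exact one_sub_pow_succ_le_exp_neg n hx₀.le hx₁
  rw [norm_mul]
  rcases le_or_gt x d with hxd | hxd
  · refine le_add_of_le_of_nonneg ?_ (by positivity)
    rw [← mul_assoc]
    exact mul_le_mul (hh x ⟨hx₀, hxd⟩) hkernel (norm_nonneg _) (by positivity)
  · refine le_add_of_nonneg_of_le (by positivity) ?_
    rw [mul_comm]
    gcongr
    exact hkernel.trans (by gcongr)

lemma norm_integral_mul_one_sub_pow_le {h : ℝ → ℂ} {p L : ℝ} (hp : -1 < p) (hd : 0 < d)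
    (hint : IntervalIntegrable h volume 0 1) (hh : ∀ x ∈ Set.Ioc 0 d, ‖h x‖ ≤ L * x ^ p)
    (hn : 0 < n) :
    ‖∫ x in (0 : ℝ)..1, h x * (1 - x : ℂ) ^ (n + 1)‖ ≤
      L * (Real.Gamma (p + 1) * (n : ℝ) ^ (-(p + 1))) +
        Real.exp (-(n * d)) * ∫ x in (0 : ℝ)..1, ‖h x‖ := by
  have hL : 0 ≤ L := nonneg_of_mul_nonneg_left
    ((norm_nonneg _).trans (hh d ⟨hd, le_rfl⟩)) (Real.rpow_pos_of_pos hd p)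
  have hgamma := integrableOn_rpow_mul_exp_neg_mul_s19 hp (Nat.cast_pos.2 hn : (0 : ℝ) < n)
  have hnear : IntervalIntegrable (fun x : ℝ => L * (x ^ p * Real.exp (-(n * x)))) volume 0 1 :=
    (intervalIntegrable_iff_integrableOn_Ioc_of_le zero_le_one).2
      ((hgamma.mono_set Set.Ioc_subset_Ioi_self).const_mul L)
  have hfar : IntervalIntegrable (fun x => Real.exp (-(n * d)) * ‖h x‖) volume 0 1 :=
    hint.norm.const_mul _
  calc ‖∫ x in (0 : ℝ)..1, h x * (1 - x : ℂ) ^ (n + 1)‖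
      ≤ ∫ x in (0 : ℝ)..1, (L * (x ^ p * Real.exp (-(n * x))) +
          Real.exp (-(n * d)) * ‖h x‖) :=
        intervalIntegral.norm_integral_le_of_norm_le zero_le_one
          (ae_of_all _ fun _ hx => norm_mul_one_sub_pow_le_add hL hh n hx) (hnear.add hfar)
    _ = L * (∫ x in Set.Ioc (0 : ℝ) 1, x ^ p * Real.exp (-(n * x))) +
          Real.exp (-(n * d)) * ∫ x in (0 : ℝ)..1, ‖h x‖ := by
        rw [intervalIntegral.integral_add hnear hfar, intervalIntegral.integral_const_mul,
          intervalIntegral.integral_const_mul, intervalIntegral.integral_of_le zero_le_one]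
    _ ≤ L * (Real.Gamma (p + 1) * (n : ℝ) ^ (-(p + 1))) +
          Real.exp (-(n * d)) * ∫ x in (0 : ℝ)..1, ‖h x‖ := by
        rw [← integral_rpow_mul_exp_neg_natCast_mul hp hn]
        gcongr
        · exact ae_restrict_of_forall_mem measurableSet_Ioi fun x (hx : 0 < x) => by positivity
        · exact Set.Ioc_subset_Ioi_self

lemma norm_integral_mul_one_sub_pow_sub_le {g : ℝ → ℂ} {c : ℂ} {L : ℝ} (hν : -1 < ν.re)
    (hd : 0 < d) (hint : IntervalIntegrable g volume 0 1)
    (hg : ∀ x ∈ Set.Ioc 0 d, ‖g x - c * (x : ℂ) ^ ν‖ ≤ L * x ^ (ν.re + 1)) (hn : 0 < n) :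
    ‖(∫ x in (0 : ℝ)..1, g x * (1 - x : ℂ) ^ (n + 1)) -
        c * (Complex.Gamma (ν + 1) * (n : ℂ) ^ (-(ν + 1)))‖ ≤
      (L * Real.Gamma (ν.re + 2) + ‖c‖ * (Real.Gamma (ν.re + 2) + Real.Gamma (ν.re + 3))) *
          (n : ℝ) ^ (-(ν.re + 2)) +
        Real.exp (-(n * d)) * ∫ x in (0 : ℝ)..1, ‖g x - c * (x : ℂ) ^ ν‖ := by
  have hpow : IntervalIntegrable (fun x : ℝ => c * (x : ℂ) ^ ν) volume 0 1 :=
    (intervalIntegrable_cpow' hν).const_mul c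
  have hkernel : Continuous fun x : ℝ => (1 - x : ℂ) ^ (n + 1) := by fun_prop
  have hbeta : ∫ x in (0 : ℝ)..1, c * (x : ℂ) ^ ν * (1 - x : ℂ) ^ (n + 1) =
      c * betaIntegral (ν + 1) (n + 2) := by
    simp only [betaIntegral_natCast_add_two, add_sub_cancel_right, mul_assoc,
      intervalIntegral.integral_const_mul]
  have hsplit : (∫ x in (0 : ℝ)..1, g x * (1 - x : ℂ) ^ (n + 1)) -
        c * (Complex.Gamma (ν + 1) * (n : ℂ) ^ (-(ν + 1))) =
      (∫ x in (0 : ℝ)..1, (g x - c * (x : ℂ) ^ ν) * (1 - x : ℂ) ^ (n + 1)) +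
        c * (betaIntegral (ν + 1) (n + 2) -
          Complex.Gamma (ν + 1) * (n : ℂ) ^ (-(ν + 1))) := by
    simp only [sub_mul]
    rw [intervalIntegral.integral_sub (hint.mul_continuousOn hkernel.continuousOn)
      (hpow.mul_continuousOn hkernel.continuousOn), hbeta]
    ring
  have hremainder := norm_integral_mul_one_sub_pow_le (by linarith : -1 < ν.re + 1) hd
    (hint.sub hpow) hg hn
  have hmain := norm_betaIntegral_sub_Gamma_mul_cpow_le (u := ν + 1)
    (by rw [add_re, one_re]; linarith) hn
  rw [add_re, one_re, show ν.re + 1 + 1 = ν.re + 2 by ring,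
    show ν.re + 1 + 2 = ν.re + 3 by ring] at hmain
  rw [show ν.re + 1 + 1 = ν.re + 2 by ring] at hremainder
  rw [hsplit]
  refine (norm_add_le _ _).trans ?_
  rw [norm_mul]
  refine (add_le_add hremainder (mul_le_mul_of_nonneg_left hmain (norm_nonneg c))).trans_eq ?_
  ring

lemma integral_norm_sub_const_mul_le {a b : ℝ} {f g : ℝ → ℂ} (hab : a ≤ b)
    (hf : IntervalIntegrable f volume a b) (hg : IntervalIntegrable g volume a b) (c : ℂ) :
    ∫ x in a..b, ‖f x - c * g x‖ ≤ (∫ x in a..b, ‖f x‖) + ‖c‖ * ∫ x in a..b, ‖g x‖ := by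
  rw [← intervalIntegral.integral_const_mul,
    ← intervalIntegral.integral_add hf.norm (hg.norm.const_mul _)]
  refine integral_mono hab (hf.sub (hg.const_mul c)).norm
    (hf.norm.add (hg.norm.const_mul _)) fun x => ?_
  simpa only [norm_mul] using norm_sub_le (f x) (c * g x)

lemma exists_norm_integral_mul_one_sub_pow_sub_le (hν : -1 < ν.re) (hd : 0 < d) (L H J : ℝ) :
    ∃ C : ℝ, ∀ (g : ℝ → ℂ) (c : ℂ), IntervalIntegrable g volume 0 1 → ‖c‖ ≤ H →
      ∫ x in (0 : ℝ)..1, ‖g x‖ ≤ J →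
      (∀ x ∈ Set.Ioc 0 d, ‖g x - c * (x : ℂ) ^ ν‖ ≤ L * x ^ (ν.re + 1)) →
      ∀ n : ℕ, 0 < n →
        ‖(∫ x in (0 : ℝ)..1, g x * (1 - x : ℂ) ^ (n + 1)) -
            c * (Complex.Gamma (ν + 1) * (n : ℂ) ^ (-(ν + 1)))‖ ≤
          C * (n : ℝ) ^ (-(ν.re + 2)) := by
  obtain ⟨E, hE⟩ := exists_exp_neg_mul_le_mul_rpow_neg hd (ν.re + 2)
  set P := ∫ x in (0 : ℝ)..1, ‖(x : ℂ) ^ ν‖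
  have hP : 0 ≤ P := integral_nonneg zero_le_one fun _ _ => norm_nonneg _
  refine ⟨L * Real.Gamma (ν.re + 2) + H * (Real.Gamma (ν.re + 2) + Real.Gamma (ν.re + 3)) +
    E * (J + H * P), fun g c hint hc hJ hg n hn => ?_⟩
  have hL1 : ∫ x in (0 : ℝ)..1, ‖g x - c * (x : ℂ) ^ ν‖ ≤ J + H * P :=
    (integral_norm_sub_const_mul_le zero_le_one hint (intervalIntegrable_cpow' hν) c).trans
      (by gcongr)
  have hdecay := hE n hn
  have hdecay₀ := (Real.exp_pos _).le.trans hdecay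
  have hΓ₂ : 0 ≤ Real.Gamma (ν.re + 2) := Real.Gamma_nonneg_of_nonneg (by linarith)
  have hΓ₃ : 0 ≤ Real.Gamma (ν.re + 3) := Real.Gamma_nonneg_of_nonneg (by linarith)
  calc ‖(∫ x in (0 : ℝ)..1, g x * (1 - x : ℂ) ^ (n + 1)) -
          c * (Complex.Gamma (ν + 1) * (n : ℂ) ^ (-(ν + 1)))‖
      ≤ (L * Real.Gamma (ν.re + 2) + ‖c‖ * (Real.Gamma (ν.re + 2) + Real.Gamma (ν.re + 3))) *
          (n : ℝ) ^ (-(ν.re + 2)) +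
        Real.exp (-(n * d)) * ∫ x in (0 : ℝ)..1, ‖g x - c * (x : ℂ) ^ ν‖ :=
        norm_integral_mul_one_sub_pow_sub_le hν hd hint hg hn
    _ ≤ (L * Real.Gamma (ν.re + 2) + H * (Real.Gamma (ν.re + 2) + Real.Gamma (ν.re + 3))) *
          (n : ℝ) ^ (-(ν.re + 2)) + E * (n : ℝ) ^ (-(ν.re + 2)) * (J + H * P) := by
        gcongr
        exact integral_nonneg zero_le_one fun _ _ => norm_nonneg _
    _ = (L * Real.Gamma (ν.re + 2) + H * (Real.Gamma (ν.re + 2) + Real.Gamma (ν.re + 3)) +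
          E * (J + H * P)) * (n : ℝ) ^ (-(ν.re + 2)) := by ring

lemma integral_mul_sub_pow_eq_mul_integral_comp_mul (g : ℝ → ℂ) (b : ℝ) (n : ℕ) :
    ∫ s in (0 : ℝ)..b, g s * (b - s : ℂ) ^ (n + 1) =
      (b : ℂ) ^ (n + 2) * ∫ x in (0 : ℝ)..1, g (b * x) * (1 - x : ℂ) ^ (n + 1) := by
  have h := smul_integral_comp_mul_left (a := 0) (b := 1)
    (fun s : ℝ => g s * (b - s : ℂ) ^ (n + 1)) b
  rw [mul_zero, mul_one] at h
  rw [← h, real_smul, ← intervalIntegral.integral_const_mul, ← intervalIntegral.integral_const_mul]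
  refine integral_congr fun x _ => ?_
  have hfactor : (b - (b * x : ℝ) : ℂ) = b * (1 - x) := by push_cast; ring
  simp only [hfactor, mul_pow]
  ring

lemma exists_norm_integral_mul_sub_pow_sub_le (hν : -1 < ν.re) {b : ℝ} (hb : 0 < b) (hd : 0 < d)
    (L H J : ℝ) :
    ∃ C : ℝ, ∀ (g : ℝ → ℂ) (c : ℂ), IntervalIntegrable g volume 0 b → ‖c‖ ≤ H →
      ∫ s in (0 : ℝ)..b, ‖g s‖ ≤ J →
      (∀ s ∈ Set.Ioc 0 d, ‖g s - c * (s : ℂ) ^ ν‖ ≤ L * s ^ (ν.re + 1)) →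
      ∀ n : ℕ, 0 < n →
        ‖(∫ s in (0 : ℝ)..b, g s * (b - s : ℂ) ^ (n + 1)) -
            c * Complex.Gamma (ν + 1) * (n : ℂ) ^ (-ν - 1) * (b : ℂ) ^ ((n : ℂ) + ν + 2)‖ ≤
          C * (‖(n : ℂ) ^ (-ν - 2)‖ * b ^ n) := by
  obtain ⟨C, hC⟩ := exists_norm_integral_mul_one_sub_pow_sub_le hν (div_pos hd hb)
    (L * b ^ (ν.re + 1)) (H * b ^ ν.re) (b⁻¹ * J)
  refine ⟨b ^ 2 * C, fun g c hint hc hJ hg n hn => ?_⟩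
  have hbν : ‖(b : ℂ) ^ ν‖ = b ^ ν.re := norm_cpow_eq_rpow_re_of_pos hb ν
  have hscaled := hC (fun x => g (b * x)) (c * (b : ℂ) ^ ν)
    (by simpa [hb.ne'] using hint.comp_mul_left (c := b))
    (by rw [norm_mul, hbν]; gcongr)
    (by
      rw [intervalIntegral.integral_comp_mul_left (fun s => ‖g s‖) hb.ne', mul_zero, mul_one,
        smul_eq_mul]
      gcongr)
    (fun x ⟨hx₀, hxd⟩ => by
      have h := hg (b * x) ⟨by positivity, by rwa [le_div_iff₀' hb] at hxd⟩
      rw [ofReal_mul, mul_cpow_ofReal_nonneg hb.le hx₀.le, Real.mul_rpow hb.le hx₀.le] at h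
      simpa only [mul_assoc] using h) n hn
  have hnorm : ‖(n : ℂ) ^ (-ν - 2)‖ = (n : ℝ) ^ (-(ν.re + 2)) := by
    rw [norm_natCast_cpow_of_pos hn]
    simp [sub_eq_add_neg, add_comm]
  have hpow : (b : ℂ) ^ ((n : ℂ) + ν + 2) = (b : ℂ) ^ (n + 2) * (b : ℂ) ^ ν := by
    rw [← cpow_natCast, ← cpow_add _ _ (ofReal_ne_zero.2 hb.ne')]
    push_cast
    ring_nf
  calc ‖(∫ s in (0 : ℝ)..b, g s * (b - s : ℂ) ^ (n + 1)) -
          c * Complex.Gamma (ν + 1) * (n : ℂ) ^ (-ν - 1) * (b : ℂ) ^ ((n : ℂ) + ν + 2)‖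
      = b ^ (n + 2) * ‖(∫ x in (0 : ℝ)..1, g (b * x) * (1 - x : ℂ) ^ (n + 1)) -
          c * (b : ℂ) ^ ν * (Complex.Gamma (ν + 1) * (n : ℂ) ^ (-(ν + 1)))‖ := by
        rw [integral_mul_sub_pow_eq_mul_integral_comp_mul, hpow, neg_add', ← abs_of_pos hb,
          ← Real.norm_eq_abs, ← norm_real, ← norm_pow, ← norm_mul, norm_real, Real.norm_eq_abs,
          abs_of_pos hb]
        ring_nf
    _ ≤ b ^ (n + 2) * (C * (n : ℝ) ^ (-(ν.re + 2))) := by gcongr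
    _ = b ^ 2 * C * (‖(n : ℂ) ^ (-ν - 2)‖ * b ^ n) := by rw [hnorm]; ring

end WatsonLemma

section EndpointContribution

open scoped Topology Pointwise

variable {b : ℝ} {ν c : ℂ} {ψ φ : ℝ → ℂ} {K : Set ℂ}

lemma exists_norm_le_mul_rpow_of_isBigO_cpow {h : ℝ → ℂ} {u : ℂ}
    (hh : h =O[𝓝[>] 0] fun s : ℝ => (s : ℂ) ^ u) :
    ∃ L : ℝ, ∃ d > 0, ∀ s ∈ Set.Ioc 0 d, ‖h s‖ ≤ L * s ^ u.re := by
  obtain ⟨L, hL⟩ := hh.bound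
  obtain ⟨d, hd, hsub⟩ := mem_nhdsGT_iff_exists_Ioc_subset.1 hL
  refine ⟨L, d, hd, fun s hs => ?_⟩
  rw [← norm_cpow_eq_rpow_re_of_pos hs.1]
  exact hsub hs

lemma exists_norm_integral_mul_mul_sub_pow_sub_le {ι : Type*} {k : ι → ℝ → ℂ} {Q Λ : ℝ}
    (hb : 0 < b) (hν : -1 < ν.re) (hint : IntervalIntegrable ψ volume 0 b)
    (hψ : (fun s : ℝ => ψ s - c * (s : ℂ) ^ ν) =O[𝓝[>] 0] fun s : ℝ => (s : ℂ) ^ (ν + 1))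
    (hk : ∀ i, ContinuousOn (k i) (Set.Icc 0 b)) (hQ : ∀ i, ∀ s ∈ Set.Icc 0 b, ‖k i s‖ ≤ Q)
    (hΛ : ∀ i, ∀ s ∈ Set.Icc 0 b, ‖k i s - k i 0‖ ≤ Λ * s) :
    ∃ C : ℝ, ∀ n : ℕ, 0 < n → ∀ i,
      ‖(∫ s in (0 : ℝ)..b, ψ s * k i s * (b - s : ℂ) ^ (n + 1)) -
          c * k i 0 * Complex.Gamma (ν + 1) * (n : ℂ) ^ (-ν - 1) *
            (b : ℂ) ^ ((n : ℂ) + ν + 2)‖ ≤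
        C * (‖(n : ℂ) ^ (-ν - 2)‖ * b ^ n) := by
  obtain ⟨L, d, hd, hL⟩ := exists_norm_le_mul_rpow_of_isBigO_cpow hψ
  obtain ⟨C, hC⟩ := exists_norm_integral_mul_sub_pow_sub_le hν hb (lt_min hd hb)
    (L * Q + ‖c‖ * Λ) (‖c‖ * Q) (∫ s in (0 : ℝ)..b, ‖ψ s‖ * Q)
  have hprod : ∀ i, IntervalIntegrable (fun s => ψ s * k i s) volume 0 b := fun i =>
    hint.mul_continuousOn (by rw [Set.uIcc_of_le hb.le]; exact hk i)
  refine ⟨C, fun n hn i => hC _ _ (hprod i) ?_ ?_ (fun s hs => ?_) n hn⟩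
  · rw [norm_mul]
    exact mul_le_mul_of_nonneg_left (hQ i 0 ⟨le_rfl, hb.le⟩) (norm_nonneg c)
  · refine integral_mono_on hb.le (hprod i).norm (hint.norm.mul_const Q) fun s hs => ?_
    rw [norm_mul]
    exact mul_le_mul_of_nonneg_left (hQ i s hs) (norm_nonneg _)
  · obtain ⟨hs₀, hs₁⟩ := hs
    have hsb : s ∈ Set.Icc 0 b := ⟨hs₀.le, hs₁.trans (min_le_right _ _)⟩
    have hLs := hL s ⟨hs₀, hs₁.trans (min_le_left _ _)⟩
    have hLs₀ := (norm_nonneg _).trans hLs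
    rw [add_re, one_re] at hLs hLs₀
    calc ‖ψ s * k i s - c * k i 0 * (s : ℂ) ^ ν‖
        = ‖(ψ s - c * (s : ℂ) ^ ν) * k i s + c * (s : ℂ) ^ ν * (k i s - k i 0)‖ := by ring_nf
      _ ≤ ‖ψ s - c * (s : ℂ) ^ ν‖ * ‖k i s‖ + ‖c‖ * s ^ ν.re * ‖k i s - k i 0‖ := by
          refine (norm_add_le _ _).trans_eq ?_
          rw [norm_mul, norm_mul, norm_mul, norm_cpow_eq_rpow_re_of_pos hs₀]
      _ ≤ L * s ^ (ν.re + 1) * Q + ‖c‖ * s ^ ν.re * (Λ * s) := by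
          gcongr
          exacts [hQ i s hsb, hΛ i s hsb]
      _ = (L * Q + ‖c‖ * Λ) * s ^ (ν.re + 1) := by rw [Real.rpow_add_one hs₀.ne']; ring

lemma exists_norm_inv_one_sub_mul_le {T : Set ℝ} (hK : IsCompact K) (hT : IsCompact T)
    (hne : ∀ z ∈ K, ∀ t ∈ T, 1 - z * t ≠ 0) :
    ∃ Q : ℝ, ∀ z ∈ K, ∀ t ∈ T, ‖(1 - z * t)⁻¹‖ ≤ Q := by
  have hcont : ContinuousOn (fun p : ℂ × ℝ => (1 - p.1 * p.2)⁻¹) (K ×ˢ T) :=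
    ContinuousOn.inv₀ (by fun_prop) fun p hp => hne p.1 hp.1 p.2 hp.2
  obtain ⟨Q, hQ⟩ := (hK.prod hT).exists_bound_of_continuousOn hcont
  exact ⟨Q, fun z hz t ht => hQ (z, t) ⟨hz, ht⟩⟩

lemma exists_norm_inv_sub_inv_le_mul_abs_sub {T : Set ℝ} (hK : IsCompact K) (hT : IsCompact T)
    (hne : ∀ z ∈ K, ∀ t ∈ T, 1 - z * t ≠ 0) :
    ∃ Λ : ℝ, ∀ z ∈ K, ∀ s ∈ T, ∀ t ∈ T, ‖(1 - z * s)⁻¹ - (1 - z * t)⁻¹‖ ≤ Λ * |s - t| := by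
  obtain ⟨R, hR⟩ := hK.isBounded.exists_norm_le
  obtain ⟨Q, hQ⟩ := exists_norm_inv_one_sub_mul_le hK hT hne
  refine ⟨R * Q * Q, fun z hz s hs t ht => ?_⟩
  have hR₀ := (norm_nonneg z).trans (hR z hz)
  have hQ₀ := (norm_nonneg _).trans (hQ z hz s hs)
  have hresolvent : (1 - z * s)⁻¹ - (1 - z * t)⁻¹ =
      z * (1 - z * s)⁻¹ * (1 - z * t)⁻¹ * (s - t : ℝ) := by
    have hs₀ := hne z hz s hs
    have ht₀ := hne z hz t ht
    push_cast
    field_simp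
    ring
  rw [hresolvent, norm_mul, norm_mul, norm_mul, norm_real, Real.norm_eq_abs]
  gcongr
  exacts [hR z hz, hQ z hz s hs, hQ z hz t ht]

lemma exists_norm_integral_div_mul_pow_sub_le (hb : 0 < b) (hν : -1 < ν.re)
    (hint : IntervalIntegrable φ volume 0 b)
    (hφ : (fun s : ℝ => φ (b - s) - c * (s : ℂ) ^ ν) =O[𝓝[>] 0] fun s : ℝ => (s : ℂ) ^ (ν + 1))
    (hK : IsCompact K) (hne : ∀ z ∈ K, ∀ t ∈ Set.Icc 0 b, 1 - z * t ≠ 0) :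
    ∃ C : ℝ, ∀ n : ℕ, 0 < n → ∀ z ∈ K,
      ‖(∫ t in (0 : ℝ)..b, φ t / (1 - z * t) * (t : ℂ) ^ (n + 1)) -
          c * Complex.Gamma (ν + 1) / (1 - b * z) * (n : ℂ) ^ (-ν - 1) *
            (b : ℂ) ^ ((n : ℂ) + ν + 2)‖ ≤
        C * (‖(n : ℂ) ^ (-ν - 2)‖ * b ^ n) := by
  obtain ⟨Q, hQ⟩ := exists_norm_inv_one_sub_mul_le hK isCompact_Icc hne
  obtain ⟨Λ, hΛ⟩ := exists_norm_inv_sub_inv_le_mul_abs_sub hK isCompact_Icc hne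
  have hreflect : ∀ s ∈ Set.Icc 0 b, b - s ∈ Set.Icc 0 b := fun s hs =>
    ⟨sub_nonneg.2 hs.2, sub_le_self b hs.1⟩
  obtain ⟨C, hC⟩ := exists_norm_integral_mul_mul_sub_pow_sub_le (ψ := fun s => φ (b - s))
    (k := fun (z : K) s => (1 - z * (b - s : ℝ))⁻¹) hb hν
    (by simpa using (hint.comp_sub_left b).symm) hφ
    (fun z => ContinuousOn.inv₀ (by fun_prop) fun s hs => hne z z.2 _ (hreflect s hs))
    (fun z s hs => hQ z z.2 _ (hreflect s hs))
    (fun z s hs => by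
      simpa [abs_of_nonneg hs.1] using
        hΛ z z.2 (b - s) (hreflect s hs) (b - 0) (hreflect 0 ⟨le_rfl, hb.le⟩))
  refine ⟨C, fun n hn z hz => ?_⟩
  have hsubst := integral_comp_sub_left (a := 0) (b := b)
    (fun t : ℝ => φ t / (1 - z * t) * (t : ℂ) ^ (n + 1)) b
  rw [sub_self, sub_zero] at hsubst
  rw [← hsubst]
  convert hC n hn ⟨z, hz⟩ using 3
  · simp only [div_eq_mul_inv, ofReal_sub]
  · rw [sub_zero, mul_comm z]
    ring

lemma one_sub_mul_ofReal_ne_zero {a : ℝ} {z : ℂ}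
    (hz : ¬(z.im = 0 ∧ (z.re ≤ -(1 / a) ∨ 1 / b ≤ z.re))) {t : ℝ} (ht : t ∈ Set.Icc (-a) b) :
    1 - z * t ≠ 0 := by
  intro h
  have hzt : z = (t⁻¹ : ℝ) := by
    rw [ofReal_inv]
    exact eq_inv_of_mul_eq_one_left (sub_eq_zero.1 h).symm
  have ht₀ : t ≠ 0 := by
    rintro rfl
    simp at h
  refine hz ⟨by rw [hzt, ofReal_im], ?_⟩
  rw [hzt, ofReal_re, ← one_div]
  rcases ht₀.lt_or_gt with hneg | hpos
  · left
    rw [← neg_neg t, one_div_neg_eq_neg_one_div]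
    exact neg_le_neg (one_div_le_one_div_of_le (neg_pos.2 hneg) (neg_le.1 ht.1))
  · exact Or.inr (one_div_le_one_div_of_le hpos ht.2)

lemma intervalIntegrable_div_one_sub_mul {a : ℝ} {z : ℂ} (hint : IntervalIntegrable φ volume a b)
    (hne : ∀ t ∈ Set.uIcc a b, 1 - z * t ≠ 0) (m : ℕ) :
    IntervalIntegrable (fun t : ℝ => φ t / (1 - z * t) * (t : ℂ) ^ m) volume a b := by
  simp only [div_eq_mul_inv]
  exact (hint.mul_continuousOn (ContinuousOn.inv₀ (by fun_prop) hne)).mul_continuousOn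
    (by fun_prop)

lemma integral_div_mul_pow_comp_neg (φ : ℝ → ℂ) (a : ℝ) (z : ℂ) (m : ℕ) :
    ∫ t in (0 : ℝ)..a, φ (-t) / (1 - -z * t) * (t : ℂ) ^ m =
      (-1) ^ m * ∫ t in (-a)..0, φ t / (1 - z * t) * (t : ℂ) ^ m := by
  have h := integral_comp_neg (a := 0) (b := a)
    (fun t : ℝ => φ t / (1 - z * t) * (t : ℂ) ^ m)
  rw [neg_zero] at h
  rw [← h, ← intervalIntegral.integral_const_mul]
  refine integral_congr fun t _ => ?_
  have hsign : (-1 : ℂ) ^ m * (-1) ^ m = 1 := by rw [← mul_pow]; simp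
  simp only [ofReal_neg, neg_pow (t : ℂ), neg_mul, mul_neg]
  linear_combination -(φ (-t) / (1 - -(z * t)) * (t : ℂ) ^ m) * hsign

lemma isBigO_sub_mul_cpow_of_eq_cpow_mul {f : ℝ → ℂ}
    (hψ : ∀ᶠ s : ℝ in 𝓝[>] 0, ψ s = (s : ℂ) ^ ν * f s) (hf : DifferentiableAt ℝ f 0) :
    (fun s : ℝ => ψ s - f 0 * (s : ℂ) ^ ν) =O[𝓝[>] 0] fun s : ℝ => (s : ℂ) ^ (ν + 1) := by
  have hsub : (fun s => f s - f 0) =O[𝓝[>] 0] fun s : ℝ => (s : ℂ) :=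
    (by simpa using isBigO_ofReal_right.2 hf.isBigO_sub :
      (fun s => f s - f 0) =O[𝓝 0] fun s : ℝ => (s : ℂ)).mono nhdsWithin_le_nhds
  refine ((isBigO_refl (fun s : ℝ => (s : ℂ) ^ ν) _).mul hsub).congr' ?_ ?_
  · filter_upwards [hψ] with s hs
    rw [hs]
    ring
  · filter_upwards [self_mem_nhdsWithin] with s (hs : 0 < s)
    rw [cpow_add _ _ (ofReal_ne_zero.2 hs.ne'), cpow_one]

lemma exists_norm_integral_neg_div_mul_pow_sub_le {a : ℝ} (ha : 0 < a) (hν : -1 < ν.re)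
    (hint : IntervalIntegrable φ volume (-a) 0)
    (hφ : (fun s : ℝ => φ (s - a) - c * (s : ℂ) ^ ν) =O[𝓝[>] 0] fun s : ℝ => (s : ℂ) ^ (ν + 1))
    (hK : IsCompact K) (hne : ∀ z ∈ K, ∀ t ∈ Set.Icc (-a) 0, 1 - z * t ≠ 0) :
    ∃ C : ℝ, ∀ n : ℕ, 0 < n → ∀ z ∈ K,
      ‖(∫ t in (-a)..0, φ t / (1 - z * t) * (t : ℂ) ^ (n + 1)) -
          (-1) ^ (n + 1) * c * Complex.Gamma (ν + 1) / (1 + a * z) * (n : ℂ) ^ (-ν - 1) *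
            (a : ℂ) ^ ((n : ℂ) + ν + 2)‖ ≤
        C * (‖(n : ℂ) ^ (-ν - 2)‖ * a ^ n) := by
  obtain ⟨C, hC⟩ := exists_norm_integral_div_mul_pow_sub_le (φ := fun t => φ (-t)) (K := -K)
    ha hν (by simpa using (hint.comp_sub_left 0).symm) (by simpa using hφ) hK.neg
    fun z hz t ht => by simpa using hne (-z) hz (-t) ⟨neg_le_neg ht.2, neg_nonpos.2 ht.1⟩
  refine ⟨C, fun n hn z hz => ?_⟩
  have hsign : (-1 : ℂ) ^ (n + 1) * (-1) ^ (n + 1) = 1 := by rw [← mul_pow]; simp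
  have hreflected := hC n hn (-z) (Set.neg_mem_neg.2 hz)
  rw [integral_div_mul_pow_comp_neg, mul_neg, sub_neg_eq_add] at hreflected
  set I := ∫ t in (-a)..0, φ t / (1 - z * t) * (t : ℂ) ^ (n + 1)
  calc ‖I - (-1) ^ (n + 1) * c * Complex.Gamma (ν + 1) / (1 + a * z) * (n : ℂ) ^ (-ν - 1) *
          (a : ℂ) ^ ((n : ℂ) + ν + 2)‖
      = ‖(-1) ^ (n + 1) * ((-1) ^ (n + 1) * I - c * Complex.Gamma (ν + 1) / (1 + a * z) *
          (n : ℂ) ^ (-ν - 1) * (a : ℂ) ^ ((n : ℂ) + ν + 2))‖ := by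
        congr 1
        linear_combination -I * hsign
    _ = ‖(-1) ^ (n + 1) * I - c * Complex.Gamma (ν + 1) / (1 + a * z) *
          (n : ℂ) ^ (-ν - 1) * (a : ℂ) ^ ((n : ℂ) + ν + 2)‖ := by
        rw [norm_mul, norm_pow, norm_neg, norm_one, one_pow, one_mul]
    _ ≤ C * (‖(n : ℂ) ^ (-ν - 2)‖ * a ^ n) := hreflected

theorem tail_integral_asymptotics_general {a : ℝ} {μ c₁ c₂ : ℂ} (ha : 0 < a) (hb : 0 < b)
    (hμ : -1 < μ.re) (hν : -1 < ν.re) (hint : IntervalIntegrable φ volume (-a) b)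
    (hφ₁ : (fun s : ℝ => φ (s - a) - c₁ * (s : ℂ) ^ μ) =O[𝓝[>] 0] fun s : ℝ => (s : ℂ) ^ (μ + 1))
    (hφ₂ : (fun s : ℝ => φ (b - s) - c₂ * (s : ℂ) ^ ν) =O[𝓝[>] 0] fun s : ℝ => (s : ℂ) ^ (ν + 1))
    (hK : IsCompact K)
    (hKslit : K ⊆ {z : ℂ | ¬(z.im = 0 ∧ (z.re ≤ -(1 / a) ∨ 1 / b ≤ z.re))}) :
    ∃ C : ℝ, ∀ n : ℕ, 0 < n → ∀ z ∈ K,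
      ‖(∫ t in (-a)..b, φ t / (1 - z * t) * (t : ℂ) ^ (n + 1)) -
          ((-1) ^ (n + 1) * c₁ * Complex.Gamma (μ + 1) / (1 + a * z) *
              (n : ℂ) ^ (-μ - 1) * (a : ℂ) ^ ((n : ℂ) + μ + 2) +
            c₂ * Complex.Gamma (ν + 1) / (1 - b * z) *
              (n : ℂ) ^ (-ν - 1) * (b : ℂ) ^ ((n : ℂ) + ν + 2))‖
        ≤ C * (‖(n : ℂ) ^ (-μ - 2)‖ * a ^ n + ‖(n : ℂ) ^ (-ν - 2)‖ * b ^ n) := by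
  have hne : ∀ z ∈ K, ∀ t ∈ Set.Icc (-a) b, 1 - z * t ≠ 0 := fun z hz t ht =>
    one_sub_mul_ofReal_ne_zero (hKslit hz) ht
  have hzero : (0 : ℝ) ∈ Set.uIcc (-a) b := Set.mem_uIcc_of_le (neg_nonpos.2 ha.le) hb.le
  obtain ⟨C₁, hC₁⟩ := exists_norm_integral_neg_div_mul_pow_sub_le ha hμ
    (hint.mono_set (Set.uIcc_subset_uIcc_left hzero)) hφ₁ hK
    fun z hz t ht => hne z hz t ⟨ht.1, ht.2.trans hb.le⟩
  obtain ⟨C₂, hC₂⟩ := exists_norm_integral_div_mul_pow_sub_le hb hν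
    (hint.mono_set (Set.uIcc_subset_uIcc_right hzero)) hφ₂ hK
    fun z hz t ht => hne z hz t ⟨(neg_nonpos.2 ha.le).trans ht.1, ht.2⟩
  refine ⟨max C₁ C₂, fun n hn z hz => ?_⟩
  have hfull := intervalIntegrable_div_one_sub_mul hint
    (by rw [Set.uIcc_of_le (by linarith)]; exact hne z hz) (n + 1)
  rw [← integral_add_adjacent_intervals (hfull.mono_set (Set.uIcc_subset_uIcc_left hzero))
    (hfull.mono_set (Set.uIcc_subset_uIcc_right hzero)), add_sub_add_comm, mul_add]
  refine norm_add_le_of_le ((hC₁ n hn z hz).trans ?_) ((hC₂ n hn z hz).trans ?_)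
  · gcongr
    exact le_max_left _ _
  · gcongr
    exact le_max_right _ _

end EndpointContribution

/-- Asymptotics of the tail integrals `∫ φ(t) t^{n+1}/(1-zt) dt`, uniformly on compact
subsets of the doubly-slit plane `ℂ \ ((-∞,-1/a] ∪ [1/b,∞))`. -/
theorem tail_integral_asymptotics
    (a b : ℝ) (ha : 0 < a) (hb : 0 < b)
    (μ ν : ℂ) (hμ : -1 < μ.re) (hν : -1 < ν.re)
    (φ f₁ f₂ : ℝ → ℂ)
    (hint : IntervalIntegrable φ volume (-a) b)
    (hφ₁ : ∀ t ∈ Set.Icc (-a) b, φ t = ((t + a : ℝ) : ℂ) ^ μ * f₁ (t + a))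
    (hφ₂ : ∀ t ∈ Set.Icc (-a) b, φ t = ((b - t : ℝ) : ℂ) ^ ν * f₂ (b - t))
    (hf₁0 : f₁ 0 ≠ 0) (hf₂0 : f₂ 0 ≠ 0)
    (hf₁ : ∃ δ > (0 : ℝ), (∀ t ∈ Set.Icc (0 : ℝ) δ, DifferentiableAt ℝ f₁ t) ∧
          ∃ M : ℝ, ∀ t ∈ Set.Icc (0 : ℝ) δ, ‖deriv f₁ t‖ ≤ M)
    (hf₂ : ∃ δ > (0 : ℝ), (∀ t ∈ Set.Icc (0 : ℝ) δ, DifferentiableAt ℝ f₂ t) ∧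
          ∃ M : ℝ, ∀ t ∈ Set.Icc (0 : ℝ) δ, ‖deriv f₂ t‖ ≤ M)
    (K : Set ℂ) (hK : IsCompact K)
    (hKslit : K ⊆ {z : ℂ | ¬(z.im = 0 ∧ (z.re ≤ -(1 / a) ∨ 1 / b ≤ z.re))}) :
    ∃ C : ℝ, ∃ N : ℕ, ∀ n ≥ N, ∀ z ∈ K,
      ‖(∫ t in (-a)..b, φ t / (1 - z * t) * (t : ℂ) ^ (n + 1)) -
          ((-1) ^ (n + 1) * f₁ 0 * Complex.Gamma (μ + 1) / (1 + a * z) *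
              (n : ℂ) ^ (-μ - 1) * (a : ℂ) ^ ((n : ℂ) + μ + 2) +
            f₂ 0 * Complex.Gamma (ν + 1) / (1 - b * z) *
              (n : ℂ) ^ (-ν - 1) * (b : ℂ) ^ ((n : ℂ) + ν + 2))‖
        ≤ C * (‖((n : ℂ) ^ (-μ - 2))‖ * a ^ n + ‖((n : ℂ) ^ (-ν - 2))‖ * b ^ n) := by
  obtain ⟨δ₁, hδ₁, hdiff₁, -⟩ := hf₁
  obtain ⟨δ₂, hδ₂, hdiff₂, -⟩ := hf₂
  obtain ⟨C, hC⟩ := tail_integral_asymptotics_general ha hb hμ hν hint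
    (isBigO_sub_mul_cpow_of_eq_cpow_mul
      (eventually_of_mem (Ioc_mem_nhdsGT (add_pos ha hb)) fun s hs => by
        simpa using hφ₁ (s - a) ⟨by linarith [hs.1], by linarith [hs.2]⟩)
      (hdiff₁ 0 ⟨le_rfl, hδ₁.le⟩))
    (isBigO_sub_mul_cpow_of_eq_cpow_mul
      (eventually_of_mem (Ioc_mem_nhdsGT (add_pos ha hb)) fun s hs => by
        simpa using hφ₂ (b - s) ⟨by linarith [hs.2], by linarith [hs.1]⟩)
      (hdiff₂ 0 ⟨le_rfl, hδ₂.le⟩)) hK hKslit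
  exact ⟨C, 1, hC⟩
end
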